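/- arXiv:2409.17454 — 5 statements merged into one kernel-verified Lean document; each statement's English description precedes it below -/
import Mathlib

section
/- Let p be a prime and let G be a finite metabelian p-group which is semi-p-abelian. Then G is strongly semi-p-abelian, i.e., G is semi-p^i-abelian for every i ≥ 1. -/
/-!
The commutator subgroup `G'` of a metabelian group `G` is a module over `ℤ[G/G']`, and collecting
gives `(a * b) ^ p = (S • ⁅b, a⁆) * a ^ p * b ^ p`, where modulo `p` the element `S` is a multiple
of a form of degree `p - 2` in `ab - 1` and `a - 1`. So `(a * b) ^ p` and `a ^ p * b ^ p` agree
modulo `Ω = {x | x ^ p = 1}` as soon as `p` and `I ^ (p - 2)` kill `p • ⁅b, a⁆`, where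
`I = (a - 1, b - 1)`.

If `G` is semi-`p`-abelian, then the pairs `m * g`, `g⁻¹` with `m ∈ G'` show that
`1 + g + ⋯ + g ^ (p - 1)` and `p` have the same kernel on `G'`, and the pairs `z * g`, `g⁻¹` with
`z ∈ Ω` centralizing `Ω ∩ G'` show that `(g - 1) ^ (p - 2)` kills `⁅g, z⁆`. For `g = ab ^ k` the
latter has the leading term `((a - 1) + k(b - 1)) ^ (p - 2) • (⁅a, z⁆ + k • ⁅b, z⁆)`, of degree
less than `p` in `k`; if `⁅b, z⁆` is killed by all that kills `⁅a, z⁆`, comparing coefficients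
modulo `p` shows that `I ^ (p - 2)` kills `⁅a, z⁆`.

If `z = a ^ p * b ^ p` lies in `Ω`, then `⁅a, z⁆` has the same annihilator as `p • ⁅b, a⁆`, so
`(a * b) ^ p` lies in `Ω`; the converse follows in the same way from `z = (a * b) ^ p` and the pair
`a⁻¹`, `ab`. Hence `G ⧸ Ω` is again semi-`p`-abelian, and one inducts on `i`.
-/

open Finset Polynomial
open Ideal (torsionOf mem_torsionOf_iff)
open scoped commutatorElement IsMulCommutative MonoidAlgebra

section CharP

variable {R : Type*} [CommRing R] (p : ℕ) [Fact p.Prime]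

-- The identity is proved at `X`, where `X - 1` can be cancelled; `a - 1` may be a zero divisor.
theorem geom_sum_eq_sub_one_pow [CharP R p] (a : R) :
    ∑ i ∈ range p, a ^ i = (a - 1) ^ (p - 1) := by
  have hX : ∑ i ∈ range p, (X : R[X]) ^ i = (X - 1) ^ (p - 1) := by
    apply (monic_X_sub_C (1 : R)).isRegular.right
    simp only [map_one]
    rw [geom_sum_mul, ← pow_succ, Nat.sub_add_cancel (Fact.out : p.Prime).one_le, sub_pow_char,
      one_pow]
  simpa [eval_finsetSum] using congrArg (eval a) hX

theorem sum_pow_mul_geom_sum [CharP R p] (a b : R) :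
    ∑ j ∈ range p, a ^ j * ∑ i ∈ range j, b ^ i =
      a * ∑ i ∈ range (p - 1), (a * b - 1) ^ i * (a - 1) ^ (p - 2 - i) := by
  have hX : ∑ j ∈ range p, C a ^ j * ∑ i ∈ range j, X ^ i =
      C a * ∑ i ∈ range (p - 1), (C a * X - 1) ^ i * (C a - 1) ^ (p - 2 - i) := by
    apply (monic_X_sub_C (1 : R)).isRegular.right
    calc (∑ j ∈ range p, C a ^ j * ∑ i ∈ range j, X ^ i) * (X - C 1)
        = ∑ j ∈ range p, (C a * X) ^ j - ∑ j ∈ range p, C a ^ j := by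
          rw [sum_mul, ← sum_sub_distrib]
          refine sum_congr rfl fun j _ => ?_
          rw [mul_assoc, map_one, geom_sum_mul, mul_pow, mul_sub_one]
      _ = (C a * X - 1) ^ (p - 1) - (C a - 1) ^ (p - 1) := by
          rw [geom_sum_eq_sub_one_pow, geom_sum_eq_sub_one_pow]
      _ = _ := by
          rw [← geom_sum₂_mul, map_one]
          simp only [Nat.sub_sub, Nat.reduceAdd]
          ring
  simpa [eval_finsetSum] using congrArg (eval b) hX

theorem natCast_dvd_of_charP_quotient {r : R}
    (h : CharP (R ⧸ Ideal.span {(p : R)}) p → Ideal.Quotient.mk (Ideal.span {(p : R)}) r = 0) :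
    (p : R) ∣ r := by
  by_cases hp : IsUnit (p : R)
  · exact hp.dvd
  · rw [← Ideal.mem_span_singleton, ← Ideal.Quotient.eq_zero_iff_mem]
    exact h (CharP.quotient R p hp)

theorem natCast_dvd_geom_sum_sub (a : R) :
    (p : R) ∣ ∑ i ∈ range p, a ^ i - (a - 1) ^ (p - 1) :=
  natCast_dvd_of_charP_quotient p fun _ => by simp [geom_sum_eq_sub_one_pow p]

theorem natCast_dvd_sum_pow_mul_geom_sum_sub (a b : R) :
    (p : R) ∣ ∑ j ∈ range p, a ^ j * ∑ i ∈ range j, b ^ i -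
      a * ∑ i ∈ range (p - 1), (a * b - 1) ^ i * (a - 1) ^ (p - 2 - i) :=
  natCast_dvd_of_charP_quotient p fun _ => by simp [sum_pow_mul_geom_sum p]

theorem natCast_dvd_sum_geom_sum_sub (a : R) :
    (p : R) ∣ ∑ j ∈ range p, ∑ i ∈ range j, a ^ i - (a - 1) ^ (p - 2) := by
  have hp : p - 1 = p - 2 + 1 := by have := (Fact.out : p.Prime).two_le; omega
  have hsum : ∑ i ∈ range (p - 1), (a - 1) ^ i * 0 ^ (p - 2 - i) = (a - 1) ^ (p - 2) := by
    rw [hp, sum_range_succ, Nat.sub_self, pow_zero, mul_one, add_eq_right]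
    refine sum_eq_zero fun i hi => ?_
    rw [zero_pow (Nat.sub_ne_zero_of_lt (mem_range.mp hi)), mul_zero]
  simpa [hsum] using natCast_dvd_sum_pow_mul_geom_sum_sub p 1 a

end CharP

section SpanPair

variable {R : Type*} [CommRing R]

theorem span_pair_pow_add_le {x y : R} {J : Ideal R} {k l : ℕ} (hx : x ^ k ∈ J) (hy : y ^ l ∈ J) :
    Ideal.span {x, y} ^ (k + l) ≤ J := by
  rw [Ideal.span_insert]
  refine Ideal.sup_pow_add_le_pow_sup_pow.trans ?_
  simpa [Ideal.span_singleton_pow, Ideal.span_singleton_le_iff_mem] using ⟨hx, hy⟩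

theorem mul_pow_sub_one_mem_span_pair (a b : R) (k : ℕ) :
    a * b ^ k - 1 ∈ Ideal.span {a - 1, b - 1} := by
  rw [show a * b ^ k - 1 = (a - 1) + a * (b ^ k - 1) by ring]
  refine add_mem (Ideal.subset_span (by simp)) (Ideal.mul_mem_left _ _ ?_)
  exact Ideal.mem_of_dvd _ (sub_one_dvd_pow_sub_one b k) (Ideal.subset_span (by simp))

theorem mul_geom_sum_sub_natCast_mem_span_pair (a b : R) (k : ℕ) :
    a * ∑ i ∈ range k, b ^ i - k ∈ Ideal.span {a - 1, b - 1} := by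
  have hsum : a * ∑ i ∈ range k, b ^ i - k = ∑ i ∈ range k, (a * b ^ i - 1) := by
    simp [sum_sub_distrib, mul_sum]
  rw [hsum]
  exact sum_mem fun i _ => mul_pow_sub_one_mem_span_pair a b i

theorem mul_pow_sub_one_sub_linear_mem (a b : R) (k : ℕ) :
    a * b ^ k - 1 - ((a - 1) + k * (b - 1)) ∈ Ideal.span {a - 1, b - 1} ^ 2 := by
  have hfactor : a * b ^ k - 1 - ((a - 1) + k * (b - 1)) =
      (a * ∑ i ∈ range k, b ^ i - k) * (b - 1) := by
    rw [sub_mul, mul_assoc, geom_sum_mul]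
    ring
  rw [hfactor, sq]
  exact Ideal.mul_mem_mul (mul_geom_sum_sub_natCast_mem_span_pair a b k)
    (Ideal.subset_span (by simp))

theorem sum_mul_sub_one_pow_mul_sub_one_pow_mem (a b : R) (n : ℕ) :
    ∑ i ∈ range (n + 1), (a * b - 1) ^ i * (a - 1) ^ (n - i) ∈
      Ideal.span {a - 1, b - 1} ^ n := by
  refine sum_mem fun i hi => ?_
  rw [← Nat.add_sub_of_le (Nat.lt_succ_iff.mp (mem_range.mp hi)), pow_add, Nat.add_sub_cancel_left]
  refine Ideal.mul_mem_mul (Ideal.pow_mem_pow ?_ _)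
    (Ideal.pow_mem_pow (Ideal.subset_span (by simp)) _)
  simpa using mul_pow_sub_one_mem_span_pair a b 1

end SpanPair

section TorsionOf

variable {R M : Type*} [CommRing R] [AddCommGroup M] [Module R M]

theorem smul_eq_smul_of_natCast_dvd_sub {n : ℕ} {r s : R} (hrs : (n : R) ∣ r - s) {m : M}
    (hm : n • m = 0) : r • m = s • m := by
  obtain ⟨t, ht⟩ := hrs
  rw [← sub_eq_zero, ← sub_smul, ht, mul_comm, mul_smul, Nat.cast_smul_eq_nsmul, hm, smul_zero]

theorem natCast_mem_torsionOf_iff {n : ℕ} {m : M} : (n : R) ∈ torsionOf R M m ↔ n • m = 0 := by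
  rw [mem_torsionOf_iff, Nat.cast_smul_eq_nsmul]

theorem torsionOf_neg (m : M) : torsionOf R M (-m) = torsionOf R M m := by
  ext r
  simp

theorem torsionOf_smul_of_isUnit {u : R} (hu : IsUnit u) (m : M) :
    torsionOf R M (u • m) = torsionOf R M m := by
  ext r
  rw [mem_torsionOf_iff, mem_torsionOf_iff, smul_comm, hu.smul_eq_zero]

end TorsionOf

section Coefficients

theorem eq_zero_of_forall_sum_pow_smul_eq_zero {K V : Type*} [Field K] [AddCommGroup V]
    [Module K V] {n : ℕ} {v : Fin n → K} (hv : Function.Injective v) {c : Fin n → V}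
    (h : ∀ j, ∑ i : Fin n, v j ^ (i : ℕ) • c i = 0) : c = 0 := by
  funext i
  refine (Module.forall_dual_apply_eq_zero_iff K _).mp fun φ => ?_
  refine congrFun (Matrix.eq_zero_of_forall_index_sum_pow_mul_eq_zero (v := φ ∘ c) hv
    fun j => ?_) i
  simpa using congrArg φ (h j)

theorem eq_zero_of_forall_sum_pow_nsmul_eq_zero {M : Type*} [AddCommGroup M] {p : ℕ}
    [Fact p.Prime] {c : ℕ → M} (hc : ∀ i, p • c i = 0)
    (h : ∀ k : ℕ, ∑ i ∈ range p, k ^ i • c i = 0) {i : ℕ} (hi : i < p) : c i = 0 := by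
  let _ : Module (ZMod p) (AddSubgroup.torsionBy M p) := AddSubgroup.torsionBy.zmodModule
  let c' : Fin p → AddSubgroup.torsionBy M p :=
    fun i => ⟨c i, AddSubgroup.torsionBy.nsmul_iff.mpr (hc i)⟩
  have hv : Function.Injective fun j : Fin p => ((j : ℕ) : ZMod p) := fun j k hjk =>
    Fin.ext (Nat.ModEq.eq_of_lt_of_lt ((ZMod.natCast_eq_natCast_iff _ _ _).mp hjk) j.2 k.2)
  have hc' : c' = 0 := eq_zero_of_forall_sum_pow_smul_eq_zero hv fun j => by
    ext
    simp only [← Nat.cast_pow, Nat.cast_smul_eq_nsmul]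
    simpa [c', Fin.sum_univ_eq_sum_range (fun i => (j : ℕ) ^ i • c i)] using h j
  exact congrArg Subtype.val (congrFun hc' ⟨i, hi⟩)

variable {R M : Type*} [CommRing R] [AddCommGroup M] [Module R M] {p : ℕ} [Fact p.Prime]

theorem coeff_smul_eq_zero_of_forall_eval_smul_eq_zero {P : R[X]} (hP : P.natDegree + 1 < p)
    {α β : M} (hα : (p : R) ∈ torsionOf R M α) (hαβ : torsionOf R M α ≤ torsionOf R M β)
    (h : ∀ k : ℕ, P.eval (k : R) • (α + k • β) = 0) {i : ℕ} (hi : i < p) :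
    P.coeff i • α = 0 := by
  let c (i : ℕ) : M := P.coeff i • α + (X * P).coeff i • β
  have hc_torsion (i : ℕ) : p • c i = 0 := by
    have hα' : (p : R) • α = 0 := hα
    have hβ' : (p : R) • β = 0 := hαβ hα
    rw [← Nat.cast_smul_eq_nsmul R, smul_add, smul_comm, hα', smul_comm, hβ']
    simp only [smul_zero, add_zero]
  have hc_sum (k : ℕ) : ∑ i ∈ range p, k ^ i • c i = P.eval (k : R) • (α + k • β) := by
    have hXP : (X * P).natDegree < p := natDegree_mul_le.trans_lt (by
      have := natDegree_X_le (R := R); omega)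
    have hkβ : P.eval (k : R) • k • β = (X * P).eval (k : R) • β := by
      rw [eval_mul, eval_X, mul_comm, mul_smul, Nat.cast_smul_eq_nsmul]
    rw [smul_add, hkβ, eval_eq_sum_range' (n := p) (by omega), eval_eq_sum_range' hXP, sum_smul,
      sum_smul, ← sum_add_distrib]
    refine sum_congr rfl fun i _ => ?_
    simp only [c, ← Nat.cast_smul_eq_nsmul R, Nat.cast_pow]
    module
  have hc {i : ℕ} : i < p → c i = 0 :=
    eq_zero_of_forall_sum_pow_nsmul_eq_zero hc_torsion fun k => (hc_sum k).trans (h k)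
  induction i with
  | zero => simpa [c] using hc hi
  | succ i ih =>
    have hβ : P.coeff i • β = 0 := hαβ (ih (by omega))
    simpa [c, coeff_X_mul, hβ] using hc hi

theorem coeff_linear_pow (x y : R) (n i : ℕ) :
    ((C y * X + C x) ^ n).coeff i = n.choose i * (x ^ (n - i) * y ^ i) := by
  have h := comp_C_mul_X_coeff (p := (X + C x) ^ n) (r := y) (n := i)
  rw [coeff_X_add_C_pow, pow_comp, add_comp, X_comp, C_comp] at h
  rw [h]
  ring

theorem mem_of_natCast_mul_mem {J : Ideal R} {n m : ℕ} (hnm : n.Coprime m) (hm : (m : R) ∈ J)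
    {r : R} (hr : (n : R) * r ∈ J) : r ∈ J := by
  obtain ⟨u, v, huv⟩ := (Nat.isCoprime_iff_coprime.mpr hnm).map (Int.castRingHom R)
  simp only [eq_intCast, Int.cast_natCast] at huv
  rw [← one_mul r, ← huv, add_mul, mul_assoc, mul_right_comm]
  exact add_mem (J.mul_mem_left _ hr) (J.mul_mem_left _ hm)

theorem span_pair_pow_le_of_forall_mem {x y : R} {n : ℕ} {J : Ideal R}
    (h : ∀ i ≤ n, x ^ (n - i) * y ^ i ∈ J) : Ideal.span {x, y} ^ n ≤ J := by
  rw [Ideal.span_insert, sup_comm, ← Ideal.add_eq_sup, add_pow]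
  refine Finset.sum_induction _ (· ≤ J) (fun _ _ => sup_le) bot_le fun i hi => ?_
  refine Ideal.mul_le_left.trans ?_
  rw [Ideal.span_singleton_pow, Ideal.span_singleton_pow, Ideal.span_singleton_mul_span_singleton,
    Ideal.span_singleton_le_iff_mem, mul_comm]
  exact h i (Nat.lt_succ_iff.mp (mem_range.mp hi))

theorem span_pair_pow_le_torsionOf {x y : R} {n : ℕ} (hn : n + 1 < p) {α β : M}
    (hα : (p : R) ∈ torsionOf R M α) (hαβ : torsionOf R M α ≤ torsionOf R M β)
    (h : ∀ k : ℕ, (x + k * y) ^ n • (α + k • β) = 0) :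
    Ideal.span {x, y} ^ n ≤ torsionOf R M α := by
  have hdeg : ((C y * X + C x) ^ n).natDegree + 1 < p :=
    (Nat.succ_le_succ (natDegree_pow_le_of_le n natDegree_linear_le)).trans_lt (by omega)
  refine span_pair_pow_le_of_forall_mem fun i hi =>
    mem_of_natCast_mul_mem ((Fact.out : p.Prime).coprime_choose_of_lt (by omega) hi).symm hα ?_
  rw [← coeff_linear_pow]
  refine coeff_smul_eq_zero_of_forall_eval_smul_eq_zero hdeg hα hαβ (fun k => ?_) (by omega)
  have heval : ((C y * X + C x) ^ n).eval (k : R) = (x + k * y) ^ n := by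
    simp only [eval_pow, eval_add, eval_mul, eval_C, eval_X]
    ring
  rw [heval, h k]

theorem pow_sub_pow_mem_pow_succ {I : Ideal R} {u v : R} (hv : v ∈ I) (huv : u - v ∈ I ^ 2)
    (n : ℕ) : u ^ n - v ^ n ∈ I ^ (n + 1) := by
  have hu : u ∈ I := by
    simpa using add_mem (Ideal.pow_le_self two_ne_zero huv) hv
  rw [← geom_sum₂_mul]
  cases n with
  | zero => simp
  | succ n =>
    rw [show n + 1 + 1 = n + 2 from rfl, pow_add]
    refine Ideal.mul_mem_mul (sum_mem fun i hi => ?_) huv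
    rw [show n = i + (n + 1 - 1 - i) by have := mem_range.mp hi; omega, pow_add]
    simpa using Ideal.mul_mem_mul (Ideal.pow_mem_pow hu i) (Ideal.pow_mem_pow hv _)

theorem span_pair_pow_le_torsionOf_of_pow_succ_le {x y : R} {u w : ℕ → R} {n : ℕ} (hn : n + 1 < p)
    {α β : M} (hα : (p : R) ∈ torsionOf R M α) (hαβ : torsionOf R M α ≤ torsionOf R M β)
    (hI : Ideal.span {x, y} ^ (n + 1) ≤ torsionOf R M α)
    (hu : ∀ k, u k - (x + k * y) ∈ Ideal.span {x, y} ^ 2) (hw : ∀ k, w k - k ∈ Ideal.span {x, y})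
    (h : ∀ k, u k ^ n • (α + w k • β) = 0) : Ideal.span {x, y} ^ n ≤ torsionOf R M α := by
  refine span_pair_pow_le_torsionOf hn hα hαβ fun k => ?_
  have hlin : x + k * y ∈ Ideal.span {x, y} :=
    add_mem (Ideal.subset_span (by simp)) (Ideal.mul_mem_left _ _ (Ideal.subset_span (by simp)))
  have hpow : u k ^ n - (x + k * y) ^ n ∈ torsionOf R M α :=
    hI (pow_sub_pow_mem_pow_succ hlin (hu k) n)
  have hfactor : (x + k * y) ^ n * (w k - k) ∈ torsionOf R M β :=
    hαβ (hI (pow_succ (Ideal.span {x, y}) n ▸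
      Ideal.mul_mem_mul (Ideal.pow_mem_pow hlin n) (hw k)))
  have hpowα := (mem_torsionOf_iff _ _).mp hpow
  have hpowβ := (mem_torsionOf_iff _ _).mp (hαβ hpow)
  rw [mem_torsionOf_iff] at hfactor
  rw [← Nat.cast_smul_eq_nsmul R]
  linear_combination (norm := module) h k - hpowα - w k • hpowβ - hfactor

theorem span_pair_pow_le_torsionOf_of_pow_le {x y : R} {u w : ℕ → R} {n l : ℕ} (hn : n + 1 < p)
    {α β : M} (hα : (p : R) ∈ torsionOf R M α) (hαβ : torsionOf R M α ≤ torsionOf R M β)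
    (hl : Ideal.span {x, y} ^ l ≤ torsionOf R M α)
    (hu : ∀ k, u k - (x + k * y) ∈ Ideal.span {x, y} ^ 2) (hw : ∀ k, w k - k ∈ Ideal.span {x, y})
    (h : ∀ k, u k ^ n • (α + w k • β) = 0) : Ideal.span {x, y} ^ n ≤ torsionOf R M α := by
  set I := Ideal.span {x, y}
  have descend {t : ℕ} (ht : I ^ (n + (t + 1)) ≤ torsionOf R M α) :
      I ^ (n + t) ≤ torsionOf R M α := by
    rw [pow_add, Ideal.mul_le]
    intro s hs r hr
    suffices I ^ n ≤ torsionOf R M (r • α) by simpa only [mem_torsionOf_iff, mul_smul] using this hs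
    refine span_pair_pow_le_torsionOf_of_pow_succ_le (β := r • β) hn ?_ (fun q hq => ?_)
      (fun q hq => ?_) hu hw fun k => ?_
    · rw [mem_torsionOf_iff, smul_comm, (mem_torsionOf_iff _ _).mp hα, smul_zero]
    · rw [mem_torsionOf_iff, ← mul_smul] at hq ⊢
      exact hαβ hq
    · rw [mem_torsionOf_iff, ← mul_smul, ← mem_torsionOf_iff (M := M)]
      rw [← add_assoc, add_right_comm, pow_add] at ht
      exact ht (Ideal.mul_mem_mul hq hr)
    · rw [smul_comm (w k), ← smul_add, smul_comm, h k, smul_zero]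
  have h_all (t : ℕ) : I ^ (n + t) ≤ torsionOf R M α → I ^ n ≤ torsionOf R M α := by
    induction t with
    | zero => exact id
    | succ t ih => exact fun ht => ih (descend ht)
  exact h_all l ((Ideal.pow_le_pow_right (Nat.le_add_left l n)).trans hl)

end Coefficients

section Metabelian

variable (G : Type*) [Group G] [IsMulCommutative (commutator G)]

/-- The conjugation action of a metabelian group on its commutator subgroup, written additively. It
is factored through the abelianization, so that it extends to a commutative group ring. -/
def conjRepresentation : Representation ℤ (Abelianization G) (Additive (commutator G)) :=
  QuotientGroup.lift (commutator G)
    ((Representation.ofMulDistribMulAction (ConjAct G) (commutator G)).comp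
      ConjAct.toConjAct.toMonoidHom) fun g hg => by
    ext x
    have hgx : g * (x.toMul : G) = x.toMul * g :=
      setLike_mul_comm hg x.toMul.2
    simp [ConjAct.Subgroup.val_conj_smul, ConjAct.toConjAct_smul, hgx]

/-- The commutator subgroup `G'` of a metabelian group `G` as a module over the group ring of
`G/G'`, acting by conjugation. -/
abbrev CommutatorModule : Type _ := (conjRepresentation G).asModule

end Metabelian

namespace CommutatorModule

variable {G : Type*} [Group G]

/-- The element of the group ring of the abelianization through which a group element acts. -/
noncomputable def act : G →* ℤ[Abelianization G] :=
  (MonoidAlgebra.of ℤ (Abelianization G)).comp Abelianization.of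

theorem isUnit_act (g : G) : IsUnit (act g) := (Group.isUnit g).map act

variable [IsMulCommutative (commutator G)]

/-- The inclusion of the commutator subgroup, from additive to multiplicative notation. -/
def toGroup (m : CommutatorModule G) : G :=
  ((conjRepresentation G).asModuleEquiv m).toMul

/-- The commutator `⁅g, h⁆ = g * h * g⁻¹ * h⁻¹` as an element of the module. -/
def comm (g h : G) : CommutatorModule G :=
  (conjRepresentation G).asModuleEquiv.symm <| Additive.ofMul
    ⟨⁅g, h⁆, Subgroup.commutator_mem_commutator (Subgroup.mem_top g) (Subgroup.mem_top h)⟩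

theorem toGroup_injective : Function.Injective (toGroup (G := G)) :=
  Subtype.val_injective

theorem toGroup_zero : toGroup (0 : CommutatorModule G) = 1 := rfl

theorem toGroup_add (m n : CommutatorModule G) : toGroup (m + n) = toGroup m * toGroup n := rfl

theorem toGroup_comm (g h : G) : toGroup (comm g h) = ⁅g, h⁆ := rfl

theorem toGroup_act_smul (g : G) (m : CommutatorModule G) :
    toGroup (act g • m) = g * toGroup m * g⁻¹ := by
  have hact : (conjRepresentation G).asModuleEquiv (act g • m) =
      conjRepresentation G (Abelianization.of g) ((conjRepresentation G).asModuleEquiv m) := by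
    rw [Representation.asModuleEquiv_map_smul, act, MonoidHom.comp_apply,
      Representation.asAlgebraHom_of]
  rw [toGroup, hact]
  rfl

theorem toGroup_nsmul (k : ℕ) (m : CommutatorModule G) : toGroup (k • m) = toGroup m ^ k := by
  induction k with
  | zero => rw [zero_smul, pow_zero, toGroup_zero]
  | succ k ih => rw [succ_nsmul, toGroup_add, ih, pow_succ]

theorem toGroup_eq_one_iff {m : CommutatorModule G} : toGroup m = 1 ↔ m = 0 := by
  rw [← toGroup_zero, toGroup_injective.eq_iff]

theorem toGroup_pow_eq_one_iff {k : ℕ} {m : CommutatorModule G} :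
    toGroup m ^ k = 1 ↔ k • m = 0 := by
  rw [← toGroup_nsmul, toGroup_eq_one_iff]

theorem comm_mul_left (g g' h : G) : comm (g * g') h = act g • comm g' h + comm g h := by
  apply toGroup_injective
  simp only [toGroup_add, toGroup_act_smul, toGroup_comm, commutatorElement_def]
  group

theorem neg_comm (g h : G) : -comm g h = comm h g := by
  rw [neg_eq_iff_add_eq_zero, ← toGroup_eq_one_iff, toGroup_add, toGroup_comm, toGroup_comm,
    ← commutatorElement_inv, inv_mul_cancel]

theorem comm_self (g : G) : comm g g = 0 := by
  rw [← toGroup_eq_one_iff, toGroup_comm, commutatorElement_self]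

theorem comm_one_left (h : G) : comm 1 h = 0 := by
  rw [← toGroup_eq_one_iff, toGroup_comm, commutatorElement_one_left]

theorem comm_mul_right (g h h' : G) : comm g (h * h') = act h • comm g h' + comm g h := by
  rw [← neg_comm, comm_mul_left, neg_add, ← smul_neg, neg_comm, neg_comm]

theorem comm_pow_left (g h : G) (k : ℕ) :
    comm (g ^ k) h = (∑ i ∈ range k, act g ^ i) • comm g h := by
  induction k with
  | zero => simp [comm_one_left]
  | succ k ih => rw [pow_succ, comm_mul_left, ih, sum_range_succ, add_smul, map_pow, add_comm]

theorem comm_pow_right (g h : G) (k : ℕ) :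
    comm g (h ^ k) = (∑ i ∈ range k, act h ^ i) • comm g h := by
  rw [← neg_comm, comm_pow_left, ← smul_neg, neg_comm]

theorem toGroup_mul_pow (m : CommutatorModule G) (g : G) (k : ℕ) :
    (toGroup m * g) ^ k = toGroup ((∑ i ∈ range k, act g ^ i) • m) * g ^ k := by
  induction k with
  | zero => simp [toGroup_zero]
  | succ k ih =>
    rw [pow_succ, ih, sum_range_succ, add_smul, toGroup_add, pow_succ, ← map_pow, toGroup_act_smul]
    group

theorem mul_pow_eq (g h : G) (k : ℕ) :
    (g * h) ^ k =
      toGroup ((∑ j ∈ range k, act g ^ j * ∑ i ∈ range j, act h ^ i) • comm h g) *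
        (g ^ k * h ^ k) := by
  induction k with
  | zero => simp [toGroup_zero]
  | succ k ih =>
    rw [pow_succ, ih, sum_range_succ, add_smul, toGroup_add, mul_smul, ← comm_pow_left, ← map_pow,
      toGroup_act_smul, toGroup_comm, commutatorElement_def]
    group

end CommutatorModule

/-- A group is semi-`n`-abelian if `(a * b) ^ n = 1` exactly when `a ^ n * b ^ n = 1`. -/
def IsSemiAbelian (n : ℕ) (G : Type*) [Group G] : Prop :=
  ∀ a b : G, (a * b) ^ n = 1 ↔ a ^ n * b ^ n = 1

namespace IsSemiAbelian

variable {G : Type*} [Group G] {n : ℕ}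

/-- The elements of exponent dividing `n`; they form a subgroup if `G` is semi-`n`-abelian. -/
def omega (h : IsSemiAbelian n G) : Subgroup G where
  carrier := {x | x ^ n = 1}
  one_mem' := one_pow n
  mul_mem' {x y} (hx : x ^ n = 1) (hy : y ^ n = 1) := (h x y).mpr (by rw [hx, hy, one_mul])
  inv_mem' {x} (hx : x ^ n = 1) := show x⁻¹ ^ n = 1 by rw [inv_pow, hx, inv_one]

theorem mem_omega (h : IsSemiAbelian n G) {x : G} : x ∈ h.omega ↔ x ^ n = 1 := Iff.rfl

instance normal_omega (h : IsSemiAbelian n G) : h.omega.Normal where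
  conj_mem x hx g := by
    rw [mem_omega] at hx ⊢
    rw [conj_pow, hx, mul_one, mul_inv_cancel]

section Metabelian

open CommutatorModule

variable [IsMulCommutative (commutator G)]

theorem geom_sum_smul_eq_zero_iff (h : IsSemiAbelian n G) (g : G) (m : CommutatorModule G) :
    (∑ i ∈ range n, act g ^ i) • m = 0 ↔ n • m = 0 := by
  have hm := h (toGroup m * g) g⁻¹
  rw [mul_inv_cancel_right, toGroup_mul_pow, inv_pow, mul_inv_cancel_right,
    toGroup_pow_eq_one_iff, toGroup_eq_one_iff] at hm
  exact hm.symm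

theorem torsionOf_geom_sum_smul (h : IsSemiAbelian n G) (g : G) (m : CommutatorModule G) :
    torsionOf ℤ[Abelianization G] _ ((∑ i ∈ range n, act g ^ i) • m) =
      torsionOf ℤ[Abelianization G] _ (n • m) := by
  ext r
  rw [mem_torsionOf_iff, mem_torsionOf_iff, smul_comm r, smul_comm r, h.geom_sum_smul_eq_zero_iff]

theorem act_pow_smul (h : IsSemiAbelian n G) (g : G) {m : CommutatorModule G} (hm : n • m = 0) :
    act (g ^ n) • m = m := by
  have hsub : act (g ^ n) • m - m = (act g - 1) • (∑ i ∈ range n, act g ^ i) • m := by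
    rw [smul_smul, mul_geom_sum, map_pow, sub_smul, one_smul]
  rw [← sub_eq_zero, hsub, (h.geom_sum_smul_eq_zero_iff g m).mpr hm, smul_zero]

theorem nsmul_comm_eq_zero (h : IsSemiAbelian n G) (g : G) {z : G} (hz : z ^ n = 1) :
    n • comm g z = 0 := by
  rw [← toGroup_pow_eq_one_iff, toGroup_comm, ← h.mem_omega, commutatorElement_def]
  exact h.omega.mul_mem (h.normal_omega.conj_mem z hz g) (h.omega.inv_mem hz)

variable {p : ℕ} [Fact p.Prime]

theorem act_sub_one_pow_smul (h : IsSemiAbelian p G) (g : G) {m : CommutatorModule G}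
    (hm : p • m = 0) : (act g - 1) ^ (p - 1) • m = 0 := by
  rw [← smul_eq_smul_of_natCast_dvd_sub (natCast_dvd_geom_sum_sub p (act g)) hm]
  exact (h.geom_sum_smul_eq_zero_iff g m).mpr hm

theorem act_sub_one_pow_smul_comm (h : IsSemiAbelian p G) (g : G) {z : G} (hz : z ^ p = 1)
    (hz_act : act z • comm g z = comm g z) :
    (act g - 1) ^ (p - 2) • comm g z = 0 := by
  have hcomm : p • comm g z = 0 := h.nsmul_comm_eq_zero g hz
  have hz_pow (j : ℕ) : act z ^ j • comm g z = comm g z := by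
    induction j with
    | zero => rw [pow_zero, one_smul]
    | succ j ih => rw [pow_succ, mul_smul, hz_act, ih]
  have hpow : (∑ j ∈ range p, act z ^ j * ∑ i ∈ range j, act g ^ i) • comm g z = 0 := by
    have hzg := (h (z * g) g⁻¹).mp (by rw [mul_inv_cancel_right, hz])
    rwa [mul_pow_eq, hz, one_mul, inv_pow, mul_inv_cancel_right, toGroup_eq_one_iff] at hzg
  rw [← smul_eq_smul_of_natCast_dvd_sub (natCast_dvd_sum_geom_sum_sub p (act g)) hcomm, ← hpow,
    sum_smul, sum_smul]
  refine sum_congr rfl fun j _ => ?_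
  rw [mul_comm, mul_smul, hz_pow]

theorem span_act_sub_one_pow_le_torsionOf (h : IsSemiAbelian p G) {a b z : G} (hz : z ^ p = 1)
    (hz_act : ∀ m : CommutatorModule G, p • m = 0 → act z • m = m)
    (hab : torsionOf ℤ[Abelianization G] _ (comm a z) ≤
      torsionOf ℤ[Abelianization G] _ (comm b z)) :
    Ideal.span {act a - 1, act b - 1} ^ (p - 2) ≤
      torsionOf ℤ[Abelianization G] _ (comm a z) := by
  have hcomm : p • comm a z = 0 := h.nsmul_comm_eq_zero a hz
  refine span_pair_pow_le_torsionOf_of_pow_le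
    (by have := (Fact.out : p.Prime).two_le; omega) (natCast_mem_torsionOf_iff.mpr hcomm) hab
    (span_pair_pow_add_le (h.act_sub_one_pow_smul a hcomm) (h.act_sub_one_pow_smul b hcomm))
    (mul_pow_sub_one_sub_linear_mem _ _) (mul_geom_sum_sub_natCast_mem_span_pair _ _) fun k => ?_
  rw [mul_smul, ← comm_pow_left, add_comm, ← comm_mul_left, ← map_pow, ← map_mul]
  exact h.act_sub_one_pow_smul_comm _ hz (hz_act _ (h.nsmul_comm_eq_zero _ hz))

theorem mul_pow_mul_inv_mem_omega (h : IsSemiAbelian p G) {a b z : G} (hz : z ^ p = 1)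
    (hz_act : ∀ m : CommutatorModule G, p • m = 0 → act z • m = m)
    (ha : torsionOf ℤ[Abelianization G] _ (comm a z) =
      torsionOf ℤ[Abelianization G] _ (p • comm b a))
    (hb : torsionOf ℤ[Abelianization G] _ (p • comm b a) ≤
      torsionOf ℤ[Abelianization G] _ (comm b z)) :
    (a * b) ^ p * (a ^ p * b ^ p)⁻¹ ∈ h.omega := by
  have hp : p - 1 = p - 2 + 1 := by have := (Fact.out : p.Prime).two_le; omega
  have hI := ha ▸ h.span_act_sub_one_pow_le_torsionOf hz hz_act (ha.le.trans hb)
  have hsq : p • p • comm b a = 0 := by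
    rw [← natCast_mem_torsionOf_iff (R := ℤ[Abelianization G]), ← ha, natCast_mem_torsionOf_iff]
    exact h.nsmul_comm_eq_zero a hz
  rw [mul_pow_eq, mul_inv_cancel_right, mem_omega, toGroup_pow_eq_one_iff, smul_comm,
    smul_eq_smul_of_natCast_dvd_sub (natCast_dvd_sum_pow_mul_geom_sum_sub p _ _) hsq, hp]
  exact hI (Ideal.mul_mem_left _ _ (sum_mul_sub_one_pow_mul_sub_one_pow_mem _ _ _))

theorem pow_mul_pow_mem_omega (h : IsSemiAbelian p G) {a b : G} (hab : (a * b) ^ p ∈ h.omega) :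
    a ^ p * b ^ p ∈ h.omega := by
  have hcomm : comm a⁻¹ ((a * b) ^ p) =
      -((∑ i ∈ range p, act (a * b) ^ i) • comm (a * b) a⁻¹) := by
    rw [comm_pow_right, ← smul_neg, neg_comm]
  have hmem := h.mul_pow_mul_inv_mem_omega (a := a⁻¹) (b := a * b) hab
    (fun m hm => h.act_pow_smul _ hm)
    (by rw [hcomm, torsionOf_neg, h.torsionOf_geom_sum_smul])
    (by rw [comm_pow_right, comm_self, smul_zero, Ideal.torsionOf_zero]; exact le_top)
  rw [inv_mul_cancel_left, inv_pow, mul_inv_rev, inv_inv, ← mul_assoc] at hmem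
  simpa only [← mul_assoc, inv_mul_cancel_right] using
    h.omega.mul_mem (h.normal_omega.mem_comm hmem) hab

theorem mul_pow_mem_omega (h : IsSemiAbelian p G) {a b : G} (hab : a ^ p * b ^ p ∈ h.omega) :
    (a * b) ^ p ∈ h.omega := by
  have hcomm_left : comm a (a ^ p * b ^ p) =
      act (a ^ p) • -((∑ i ∈ range p, act b ^ i) • comm b a) := by
    rw [comm_mul_right, comm_pow_right, comm_pow_right, comm_self, smul_zero, add_zero, ← smul_neg,
      neg_comm]
  have hcomm_right : comm b (a ^ p * b ^ p) = (∑ i ∈ range p, act a ^ i) • comm b a := by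
    rw [comm_mul_right, comm_pow_right, comm_pow_right, comm_self, smul_zero, smul_zero, zero_add]
  have hmem := h.mul_pow_mul_inv_mem_omega (a := a) (b := b) hab
    (fun m hm => by rw [map_mul, mul_smul, h.act_pow_smul b hm, h.act_pow_smul a hm])
    (by rw [hcomm_left, torsionOf_smul_of_isUnit (isUnit_act _), torsionOf_neg,
      h.torsionOf_geom_sum_smul])
    (by rw [hcomm_right, h.torsionOf_geom_sum_smul])
  simpa only [inv_mul_cancel_right] using h.omega.mul_mem hmem hab

theorem quotient_omega (h : IsSemiAbelian p G) : IsSemiAbelian p (G ⧸ h.omega) := by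
  intro x y
  induction x using QuotientGroup.induction_on with | H a =>
  induction y using QuotientGroup.induction_on with | H b =>
  simp only [← QuotientGroup.mk_mul, ← QuotientGroup.mk_pow, QuotientGroup.eq_one_iff]
  exact ⟨h.pow_mul_pow_mem_omega, h.mul_pow_mem_omega⟩

end Metabelian

end IsSemiAbelian

instance isMulCommutative_commutator_quotient {G : Type*} [Group G]
    [IsMulCommutative (commutator G)] (N : Subgroup G) [N.Normal] :
    IsMulCommutative (commutator (G ⧸ N)) := by
  have hmap : commutator (G ⧸ N) = (commutator G).map (QuotientGroup.mk' N) := by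
    rw [map_commutator_eq, QuotientGroup.range_mk', commutator_def]
  rw [hmap]
  infer_instance

theorem metabelian_semipabelian_strongly_general {p : ℕ} [Fact p.Prime] {G : Type*} [Group G]
    [IsMulCommutative (commutator G)] (h : IsSemiAbelian p G) (i : ℕ) :
    IsSemiAbelian (p ^ i) G := by
  induction i generalizing G with
  | zero => intro a b; simp
  | succ i ih =>
    intro a b
    have hquot := ih h.quotient_omega a b
    simp only [← QuotientGroup.mk_mul, ← QuotientGroup.mk_pow, QuotientGroup.eq_one_iff,
      h.mem_omega] at hquot
    rw [pow_succ, pow_mul, pow_mul, pow_mul, ← h, hquot]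

/-- A finite metabelian semi-p-abelian p-group is strongly semi-p-abelian,
i.e. semi-`p^i`-abelian for every `i ≥ 1`. -/
theorem metabelian_semipabelian_strongly (p : ℕ) [Fact p.Prime]
    (G : Type*) [Group G] [Finite G] (hG : IsPGroup p G)
    (hmeta : ∀ x y : ↥(commutator G), x * y = y * x)
    (hsemi : ∀ a b : G, (a * b) ^ p = 1 ↔ a ^ p * b ^ p = 1) :
    ∀ i : ℕ, 1 ≤ i →
      ∀ a b : G, (a * b) ^ (p ^ i) = 1 ↔ a ^ (p ^ i) * b ^ (p ^ i) = 1 := by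
  have : IsMulCommutative (commutator G) := ⟨⟨hmeta⟩⟩
  exact fun i _ => metabelian_semipabelian_strongly_general hsemi i
end

section
/- Let p be a prime, i ≥ 1, and let G be a finite p-group which is semi-p^i-abelian. Then for all a, b ∈ G, the commutator [a^(p^i), b] = 1 if and only if [a, b]^(p^i) = 1. -/
/-!
The commutator `[a, b]` is the product of `a⁻¹` and the conjugate `b⁻¹ * a * b`. Since powers
commute with inversion and conjugation, `[a ^ n, b]` is the product of the `n`-th powers of the same
two elements.
-/

theorem semiPowAbelian_commutator_pow_general {G : Type*} [Group G] {n : ℕ}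
    (hsemi : ∀ a b : G, (a * b) ^ n = 1 ↔ a ^ n * b ^ n = 1) (a b : G) :
    (a ^ n)⁻¹ * b⁻¹ * a ^ n * b = 1 ↔ (a⁻¹ * b⁻¹ * a * b) ^ n = 1 := by
  have conj_pow_eq : (b⁻¹ * a * b) ^ n = b⁻¹ * a ^ n * b := by
    simpa only [inv_inv] using conj_pow (a := b⁻¹) (b := a) (i := n)
  calc
    (a ^ n)⁻¹ * b⁻¹ * a ^ n * b = 1 ↔ a⁻¹ ^ n * (b⁻¹ * a * b) ^ n = 1 := by
      simp only [conj_pow_eq, inv_pow, ← mul_assoc]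
    _ ↔ (a⁻¹ * (b⁻¹ * a * b)) ^ n = 1 := (hsemi a⁻¹ (b⁻¹ * a * b)).symm
    _ ↔ (a⁻¹ * b⁻¹ * a * b) ^ n = 1 := by simp only [← mul_assoc]

/-- In a finite semi-`p^i`-abelian p-group, `[a^(p^i), b] = 1` iff `[a,b]^(p^i) = 1`,
where `[x,y] = x⁻¹ * y⁻¹ * x * y`. -/
theorem semiPowAbelian_commutator_pow (p i : ℕ) [Fact p.Prime] (hi : 1 ≤ i)
    (G : Type*) [Group G] [Finite G] (hG : IsPGroup p G)
    (hsemi : ∀ a b : G, (a * b) ^ (p ^ i) = 1 ↔ a ^ (p ^ i) * b ^ (p ^ i) = 1) :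
    ∀ a b : G,
      (a ^ (p ^ i))⁻¹ * b⁻¹ * a ^ (p ^ i) * b = 1 ↔
        (a⁻¹ * b⁻¹ * a * b) ^ (p ^ i) = 1 :=
  semiPowAbelian_commutator_pow_general hsemi
end

section
/- Let p be a prime and let G be a finite p-group which is semi-p-abelian, not semi-p²-abelian, and such that every proper subgroup of G is semi-p²-abelian. Then the exponent of the derived subgroup G' divides p², the subgroup ℧₂(G) is contained in the center Z(G), and the subgroup ℧₁(G) is abelian. -/
/-!
The key identity is `⁅a, y⁆ = a * (y * a⁻¹ * y⁻¹)`: in a normal semi-`n`-abelian subgroup containing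
`a` it gives `⁅a, y⁆ ^ n = 1 ↔ Commute (a ^ n) y`. If every proper subgroup of the nilpotent group
`G` is semi-`n`-abelian but `G` is not, then the normal closure of a single element is proper, as a
nilpotent group that is the normal closure of one element is cyclic; so the equivalence holds for
all `a` and `y`. A pair `a`, `b` violating the semi-`n`-abelian condition generates `G`, and the
equivalence gives `⁅a, b⁆ ^ n = 1`. The derived subgroup lies in the normal closure of `⁅a, b⁆`,
which is again proper, hence consists of elements killed by `n`; the equivalence then makes `n`-th
powers central.

If moreover `G` is semi-`m`-abelian with `n = m ^ 2`, the equivalence for `m` applies to every pair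
and lets the exponent move across: `x ^ (m ^ 2)` commuting with `y` means that `x ^ m` commutes
with `y ^ m`.
-/

open Subgroup
open scoped commutatorElement

section Group

variable {G : Type*} [Group G]

theorem zpowers_eq_top_of_normalClosure_singleton_eq_top [Group.IsNilpotent G] {a : G}
    (ha : normalClosure {a} = ⊤) : zpowers a = ⊤ := by
  refine Group.nilpotent_center_quotient_ind
    (P := fun G _ _ ↦ ∀ a : G, normalClosure {a} = ⊤ → zpowers a = ⊤) G ?_ ?_ a ha
  · exact fun G _ _ a _ ↦ Subsingleton.elim _ _
  · intro G _ _ ih a ha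
    have hquot : normalClosure {(a : G ⧸ center G)} = ⊤ := by
      have hsurj := QuotientGroup.mk'_surjective (center G)
      simpa [ha, map_top_of_surjective _ hsurj] using
        (map_normalClosure {a} (QuotientGroup.mk' (center G)) hsurj).symm
    have : IsCyclic (G ⧸ center G) :=
      isCyclic_iff_exists_zpowers_eq_top.2 ⟨_, ih _ hquot⟩
    have : IsMulCommutative G :=
      (QuotientGroup.mk' (center G)).isMulCommutative_of_isCyclic_of_ker_le_center
        (QuotientGroup.ker_mk' _).le
    rw [← normalClosure_eq_self (zpowers a), zpowers_eq_closure,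
      normalClosure_closure_eq_normalClosure, ha]

theorem commutator_le_of_closure_eq_top {s : Set G} (hs : closure s = ⊤) {N : Subgroup G}
    [N.Normal] (hN : ∀ x ∈ s, ∀ y ∈ s, ⁅x, y⁆ ∈ N) : commutator G ≤ N := by
  have hcomm : IsMulCommutative (closure (QuotientGroup.mk' N '' s)) := by
    refine isMulCommutative_closure ?_
    rintro _ ⟨x, hx, rfl⟩ _ ⟨y, hy, rfl⟩
    rw [← commutatorElement_eq_one_iff_mul_comm, ← map_commutatorElement]
    exact (QuotientGroup.eq_one_iff _).2 (hN x hx y hy)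
  rw [← MonoidHom.map_closure, hs, map_top_of_surjective _ (QuotientGroup.mk'_surjective N)]
    at hcomm
  rw [← Normal.quotient_commutative_iff_commutator_le]
  exact ⟨⟨fun x y ↦ setLike_mul_comm (mem_top x) (mem_top y)⟩⟩

theorem commutator_le_normalClosure_of_closure_pair_eq_top {a b : G} (hab : closure {a, b} = ⊤) :
    commutator G ≤ normalClosure {⁅a, b⁆} := by
  have hmem : ⁅a, b⁆ ∈ normalClosure {⁅a, b⁆} := subset_normalClosure rfl
  refine commutator_le_of_closure_eq_top hab ?_
  rintro x (rfl | rfl) y (rfl | rfl)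
  · simp
  · exact hmem
  · simpa using inv_mem hmem
  · simp

end Group

/-- The subgroup `℧` generated by the `n`-th powers of the elements of `G`. For a `p`-group,
`℧ᵢ(G)` is `agemo (p ^ i) G`. -/
def agemo (n : ℕ) (G : Type*) [Group G] : Subgroup G :=
  closure {x | ∃ g : G, g ^ n = x}

/-- Semi-`n`-abelian groups; the semi-`pⁱ`-abelian groups of the literature are the case
`n = p ^ i`. -/
def IsSemiPowAbelian (n : ℕ) (G : Type*) [Group G] : Prop :=
  ∀ a b : G, (a * b) ^ n = 1 ↔ a ^ n * b ^ n = 1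

/-- Inner (that is, minimal non-) semi-`n`-abelian groups: the proper subgroups are
semi-`n`-abelian, the group itself is not. -/
structure IsInnerSemiPowAbelian (n : ℕ) (G : Type*) [Group G] : Prop where
  not_isSemiPowAbelian : ¬ IsSemiPowAbelian n G
  isSemiPowAbelian_of_ne_top : ∀ H : Subgroup G, H ≠ ⊤ → IsSemiPowAbelian n H

section SemiPowAbelian

variable {G : Type*} [Group G] {m n : ℕ}

namespace IsSemiPowAbelian

theorem of_isMulCommutative [IsMulCommutative G] : IsSemiPowAbelian n G := fun a b ↦ by
  rw [Commute.mul_pow (mul_comm' a b)]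

theorem subgroup_iff {H : Subgroup G} :
    IsSemiPowAbelian n H ↔ ∀ a ∈ H, ∀ b ∈ H, (a * b) ^ n = 1 ↔ a ^ n * b ^ n = 1 := by
  simp [IsSemiPowAbelian, Subtype.ext_iff]

theorem subgroup (h : IsSemiPowAbelian n G) (H : Subgroup G) : IsSemiPowAbelian n H :=
  subgroup_iff.2 fun a _ b _ ↦ h a b

theorem pow_eq_one_of_mem_closure {s : Set G} (h : IsSemiPowAbelian n (closure s))
    (hs : ∀ x ∈ s, x ^ n = 1) {x : G} (hx : x ∈ closure s) : x ^ n = 1 := by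
  induction hx using closure_induction with
  | mem x hx => exact hs x hx
  | one => exact one_pow n
  | mul x y hx hy ihx ihy => rw [subgroup_iff.1 h x hx y hy, ihx, ihy, one_mul]
  | inv x _ ihx => rw [inv_pow, ihx, inv_one]

theorem commutatorElement_pow_eq_one_iff {N : Subgroup G} [hN : N.Normal]
    (h : IsSemiPowAbelian n N) {a : G} (ha : a ∈ N) (y : G) :
    ⁅a, y⁆ ^ n = 1 ↔ Commute (a ^ n) y := by
  have hconj : y * a⁻¹ * y⁻¹ ∈ N := hN.conj_mem _ (inv_mem ha) y
  calc ⁅a, y⁆ ^ n = 1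
      ↔ (a * (y * a⁻¹ * y⁻¹)) ^ n = 1 := by simp only [commutatorElement_def, mul_assoc]
    _ ↔ a ^ n * (y * a⁻¹ * y⁻¹) ^ n = 1 := subgroup_iff.1 h a ha _ hconj
    _ ↔ ⁅a ^ n, y⁆ = 1 := by
      rw [conj_pow, inv_pow, commutatorElement_def]
      simp only [mul_assoc]
    _ ↔ Commute (a ^ n) y := commutatorElement_eq_one_iff_commute

theorem commute_pow_left_iff_commute_pow_right (h : IsSemiPowAbelian n G) (x y : G) :
    Commute (x ^ n) y ↔ Commute x (y ^ n) := by
  have hiff (a b : G) : ⁅a, b⁆ ^ n = 1 ↔ Commute (a ^ n) b :=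
    (h.subgroup ⊤).commutatorElement_pow_eq_one_iff (mem_top a) b
  rw [← hiff, ← commutatorElement_inv, inv_pow, inv_eq_one, hiff, Commute.symm_iff]

end IsSemiPowAbelian

namespace IsInnerSemiPowAbelian

theorem normalClosure_singleton_ne_top [Group.IsNilpotent G] (h : IsInnerSemiPowAbelian n G)
    (a : G) : normalClosure {a} ≠ ⊤ := fun ha ↦ by
  have : IsCyclic G :=
    isCyclic_iff_exists_zpowers_eq_top.2 ⟨a, zpowers_eq_top_of_normalClosure_singleton_eq_top ha⟩
  exact h.not_isSemiPowAbelian .of_isMulCommutative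

theorem isSemiPowAbelian_normalClosure_singleton [Group.IsNilpotent G]
    (h : IsInnerSemiPowAbelian n G) (a : G) : IsSemiPowAbelian n (normalClosure {a}) :=
  h.isSemiPowAbelian_of_ne_top _ (h.normalClosure_singleton_ne_top a)

theorem commutatorElement_pow_eq_one_iff [Group.IsNilpotent G] (h : IsInnerSemiPowAbelian n G)
    (a y : G) : ⁅a, y⁆ ^ n = 1 ↔ Commute (a ^ n) y :=
  (h.isSemiPowAbelian_normalClosure_singleton a).commutatorElement_pow_eq_one_iff
    (subset_normalClosure rfl) y

theorem closure_pair_eq_top (h : IsInnerSemiPowAbelian n G) {a b : G}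
    (hab : ¬ ((a * b) ^ n = 1 ↔ a ^ n * b ^ n = 1)) : closure {a, b} = ⊤ := by
  by_contra hne
  exact hab <| IsSemiPowAbelian.subgroup_iff.1 (h.isSemiPowAbelian_of_ne_top _ hne)
    a (subset_closure (by simp)) b (subset_closure (by simp))

theorem exists_closure_pair_eq_top_commutatorElement_pow_eq_one [Group.IsNilpotent G]
    (h : IsInnerSemiPowAbelian n G) : ∃ a b : G, closure {a, b} = ⊤ ∧ ⁅a, b⁆ ^ n = 1 := by
  obtain ⟨a, b, hab⟩ : ∃ a b : G, ¬ ((a * b) ^ n = 1 ↔ a ^ n * b ^ n = 1) := by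
    simpa only [IsSemiPowAbelian, not_forall] using h.not_isSemiPowAbelian
  refine ⟨a, b, h.closure_pair_eq_top hab, ?_⟩
  obtain ⟨hmul, -⟩ | ⟨hpow, -⟩ := xor_iff_not_iff _ _ |>.2 hab
  · have hcomm : Commute ((a * b) ^ n) b := hmul ▸ Commute.one_left b
    have heq : ⁅a * b, b⁆ = ⁅a, b⁆ := by simp [commutatorElement_mul_left_eq_conj_mul]
    rwa [← h.commutatorElement_pow_eq_one_iff, heq] at hcomm
  · rw [h.commutatorElement_pow_eq_one_iff, eq_inv_of_mul_eq_one_left hpow]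
    exact (Commute.pow_self b n).inv_left

theorem pow_eq_one_of_mem_commutator [Group.IsNilpotent G] (h : IsInnerSemiPowAbelian n G) {x : G}
    (hx : x ∈ commutator G) : x ^ n = 1 := by
  obtain ⟨a, b, hgen, hab⟩ := h.exists_closure_pair_eq_top_commutatorElement_pow_eq_one
  refine (h.isSemiPowAbelian_normalClosure_singleton ⁅a, b⁆).pow_eq_one_of_mem_closure ?_
    (commutator_le_normalClosure_of_closure_pair_eq_top hgen hx)
  intro y hy
  obtain ⟨_, rfl, hconj⟩ := Group.mem_conjugatesOfSet_iff.1 hy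
  obtain ⟨g, rfl⟩ := isConj_iff.1 hconj
  rw [conj_pow, hab, mul_one, mul_inv_cancel]

theorem exponent_commutator_dvd [Group.IsNilpotent G] (h : IsInnerSemiPowAbelian n G) :
    Monoid.exponent (commutator G) ∣ n :=
  Monoid.exponent_dvd_of_forall_pow_eq_one fun x ↦
    Subtype.ext (h.pow_eq_one_of_mem_commutator x.2)

theorem commute_pow [Group.IsNilpotent G] (h : IsInnerSemiPowAbelian n G) (x y : G) :
    Commute (x ^ n) y :=
  (h.commutatorElement_pow_eq_one_iff x y).1 <| h.pow_eq_one_of_mem_commutator <|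
    commutator_mem_commutator (mem_top x) (mem_top y)

theorem agemo_le_center [Group.IsNilpotent G] (h : IsInnerSemiPowAbelian n G) :
    agemo n G ≤ center G := by
  rw [agemo, closure_le]
  rintro _ ⟨x, rfl⟩
  exact mem_center_iff.2 fun y ↦ (h.commute_pow x y).symm

theorem isMulCommutative_agemo [Group.IsNilpotent G] (h : IsInnerSemiPowAbelian (m ^ 2) G)
    (hm : IsSemiPowAbelian m G) : IsMulCommutative (agemo m G) := by
  refine isMulCommutative_closure ?_
  rintro _ ⟨x, rfl⟩ _ ⟨y, rfl⟩
  have hsq : Commute ((x ^ m) ^ m) y := by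
    simpa only [← pow_mul, ← sq] using h.commute_pow x y
  exact (hm.commute_pow_left_iff_commute_pow_right _ _).1 hsq

end IsInnerSemiPowAbelian

theorem inner_semi_p2_structure_general [Group.IsNilpotent G] (hm : IsSemiPowAbelian m G)
    (h : IsInnerSemiPowAbelian (m ^ 2) G) :
    Monoid.exponent (commutator G) ∣ m ^ 2 ∧ agemo (m ^ 2) G ≤ center G ∧
      ∀ x y : agemo m G, x * y = y * x :=
  have := h.isMulCommutative_agemo hm
  ⟨h.exponent_commutator_dvd, h.agemo_le_center, mul_comm'⟩

end SemiPowAbelian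

/-- For a finite p-group which is semi-p-abelian, not semi-`p²`-abelian, and all of
whose proper subgroups are semi-`p²`-abelian: the exponent of the derived subgroup
divides `p²`, `℧₂(G) ≤ Z(G)`, and `℧₁(G)` is abelian. -/
theorem inner_semi_p2_structure (p : ℕ) [Fact p.Prime]
    (G : Type*) [Group G] [Finite G] (hG : IsPGroup p G)
    (h1 : ∀ a b : G, (a * b) ^ p = 1 ↔ a ^ p * b ^ p = 1)
    (h2 : ¬ (∀ a b : G, (a * b) ^ (p ^ 2) = 1 ↔ a ^ (p ^ 2) * b ^ (p ^ 2) = 1))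
    (hproper : ∀ H : Subgroup G, H ≠ ⊤ →
      ∀ a b : H, (a * b) ^ (p ^ 2) = 1 ↔ a ^ (p ^ 2) * b ^ (p ^ 2) = 1) :
    Monoid.exponent ↥(commutator G) ∣ p ^ 2 ∧
    Subgroup.closure {x : G | ∃ g : G, g ^ (p ^ 2) = x} ≤ Subgroup.center G ∧
    ∀ x y : ↥(Subgroup.closure {x : G | ∃ g : G, g ^ p = x}), x * y = y * x := by
  have := hG.isNilpotent
  exact inner_semi_p2_structure_general h1 ⟨h2, hproper⟩
end

section
/- Let G be a finite 3-group which is semi-3-abelian, generated by elements a₁, …, a_n with |G/Φ(G)| = 3^n (where Φ(G) is the Frattini subgroup). Then Ω₁(G) ≤ Z_{n+1}(G), the (n+1)-st term of the upper central series of G. -/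
/-!
Say that `v` is a period of the cubing map if `(v * g) ^ 3 = g ^ 3` for all `g`; the periods form a
normal subgroup, and in a semi-3-abelian group every `v` with `v ^ 3 = 1` is a period. The
periodicity at `g` reads `v * vᵍ * vᵍᵍ = 1`, where `vᵍ = g * v * g⁻¹`. Comparing this identity for
`y` and for `y * x`, where `x` commutes with `v`, shows that `x` also commutes with `vʸ`. In
particular the conjugates of `v` commute, and on the group of exponent 3 they generate every `y`
acts with `(y - 1) ^ 2 = 1 + y + y ^ 2 = 0`, so `⁅v, y⁆` commutes with `y`, as well as with
everything that commutes with `v`. A commutator with a new generator thus enlarges the set of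
generators that centralize the result, and after `n` such commutators the result is central.
-/

open scoped commutatorElement

section PowPeriods

/-- The subgroup of (left) periods of the power map `g ↦ g ^ n`. For `n = 3` it contains `Ω₁(G)`
when `G` is semi-3-abelian, and it stands in for `Ω₁(G)` in the bound on the central series. -/
def powPeriods (G : Type*) [Group G] (n : ℕ) : Subgroup G where
  carrier := {v | ∀ g, (v * g) ^ n = g ^ n}
  one_mem' g := by rw [one_mul]
  mul_mem' hv hw g := by rw [mul_assoc, hv, hw]
  inv_mem' {v} hv g := by rw [← hv, mul_inv_cancel_left]

variable {G : Type*} [Group G] {n : ℕ} {v : G}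

instance powPeriods_normal : (powPeriods G n).Normal where
  conj_mem v hv x g := calc
    (x * v * x⁻¹ * g) ^ n = (x * (v * (x⁻¹ * g * x)) * x⁻¹) ^ n := by group
    _ = x * (x⁻¹ * g * x) ^ n * x⁻¹ := by rw [conj_pow, hv]
    _ = (x * (x⁻¹ * g * x) * x⁻¹) ^ n := conj_pow.symm
    _ = g ^ n := by group

lemma pow_eq_one_of_mem_powPeriods (hv : v ∈ powPeriods G n) : v ^ n = 1 := by
  simpa using hv 1

lemma closure_pow_eq_one_le_powPeriods (h : ∀ a b : G, (a * b) ^ n = 1 → a ^ n * b ^ n = 1) :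
    Subgroup.closure {g : G | g ^ n = 1} ≤ powPeriods G n := by
  refine (Subgroup.closure_le _).2 fun v hv g ↦ ?_
  have hg : (v * g) ^ n * g⁻¹ ^ n = 1 := h _ _ (by rwa [mul_inv_cancel_right])
  rwa [inv_pow, mul_inv_eq_one] at hg

end PowPeriods

section CubePeriods

variable {G : Type*} [Group G] {v x : G}

lemma commute_iff_conj_eq : Commute v x ↔ MulAut.conj x v = v := by
  rw [MulAut.conj_apply, mul_inv_eq_iff_eq_mul, eq_comm, commute_iff_eq]

lemma commutatorElement_eq_mul_conj_inv (v y : G) : ⁅v, y⁆ = v * (MulAut.conj y v)⁻¹ := by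
  simp [commutatorElement_def, mul_assoc]

lemma mul_conj_mul_conj_conj_eq_one (hv : v ∈ powPeriods G 3) (g : G) :
    v * MulAut.conj g v * MulAut.conj g (MulAut.conj g v) = 1 := calc
  v * MulAut.conj g v * MulAut.conj g (MulAut.conj g v) = (v * g) ^ 3 * (g ^ 3)⁻¹ := by
    simp only [MulAut.conj_apply, pow_succ, pow_zero, one_mul]; group
  _ = 1 := by rw [hv, mul_inv_cancel]

lemma commute_conj_of_mem_powPeriods (hv : v ∈ powPeriods G 3) (hx : Commute v x) (y : G) :
    Commute (MulAut.conj y v) x := by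
  have h_yx : MulAut.conj (y * x) v = MulAut.conj y v := by
    rw [map_mul, MulAut.mul_apply, commute_iff_conj_eq.1 hx]
  have h := mul_conj_mul_conj_conj_eq_one hv (y * x)
  rw [h_yx, ← mul_conj_mul_conj_conj_eq_one hv y, mul_right_inj, map_mul, MulAut.mul_apply] at h
  exact commute_iff_conj_eq.2 ((MulAut.conj y).injective h)

lemma commute_commutatorElement_of_mem_powPeriods (hv : v ∈ powPeriods G 3) (hx : Commute v x)
    (y : G) : Commute ⁅v, y⁆ x := by
  rw [commutatorElement_eq_mul_conj_inv]
  exact hx.mul_left (commute_conj_of_mem_powPeriods hv hx y).inv_left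

lemma commute_commutatorElement_self_of_mem_powPeriods (hv : v ∈ powPeriods G 3) (y : G) :
    Commute ⁅v, y⁆ y := by
  rw [commute_iff_conj_eq, commutatorElement_eq_mul_conj_inv, map_mul, map_inv]
  have h_prod := mul_conj_mul_conj_conj_eq_one hv y
  have h_comm : Commute (MulAut.conj y v) v := commute_conj_of_mem_powPeriods hv (.refl v) y
  have h_cube : MulAut.conj y v ^ 3 = 1 := by
    rw [← map_pow, pow_eq_one_of_mem_powPeriods hv, map_one]
  generalize MulAut.conj y v = w at *
  calc
    w * (MulAut.conj y w)⁻¹ = w * (v * w) := by rw [eq_inv_of_mul_eq_one_left h_prod]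
    _ = v * w ^ 2 := by rw [h_comm.left_comm, sq]
    _ = v * w⁻¹ := by rw [eq_inv_of_mul_eq_one_left (a := w ^ 2) (by rwa [← pow_succ])]

end CubePeriods

section UpperCentralSeries

variable {G : Type*} [Group G]

lemma commutatorElement_mem_of_mem_left {N : Subgroup G} [N.Normal] {v : G} (hv : v ∈ N) (y : G) :
    ⁅v, y⁆ ∈ N :=
  Subgroup.commutator_le_left N ⊤ (Subgroup.commutator_mem_commutator hv (Subgroup.mem_top y))

lemma commutatorElement_mem_of_closure_eq_top {N : Subgroup G} [N.Normal] {s : Set G}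
    (hs : Subgroup.closure s = ⊤) {v : G} (h : ∀ y ∈ s, ⁅v, y⁆ ∈ N) (y : G) : ⁅v, y⁆ ∈ N := by
  have mem_iff (z : G) : ⁅v, z⁆ ∈ N ↔
      z ∈ (Subgroup.centralizer {(v : G ⧸ N)}).comap (QuotientGroup.mk' N) := by
    rw [Subgroup.mem_comap, Subgroup.mem_centralizer_singleton_iff, QuotientGroup.mk'_apply,
      ← QuotientGroup.eq_one_iff, ← QuotientGroup.mk'_apply, map_commutatorElement,
      commutatorElement_eq_one_iff_mul_comm, eq_comm]
    rfl
  have h_closure := (Subgroup.closure_le _).2 fun z hz ↦ (mem_iff z).1 (h z hz)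
  exact (mem_iff y).2 (h_closure (hs ▸ Subgroup.mem_top y))

lemma mem_upperCentralSeries_succ_of_closure_eq_top {s : Set G} (hs : Subgroup.closure s = ⊤)
    {k : ℕ} {v : G} (h : ∀ y ∈ s, ⁅v, y⁆ ∈ Subgroup.upperCentralSeries G k) :
    v ∈ Subgroup.upperCentralSeries G (k + 1) :=
  Subgroup.mem_upperCentralSeries_succ_iff.2 (commutatorElement_mem_of_closure_eq_top hs h)

variable {ι : Type*} {a : ι → G}

lemma mem_upperCentralSeries_of_mem_powPeriods_of_commute
    (hgen : Subgroup.closure (Set.range a) = ⊤) {t : Finset ι} {v : G} (hv : v ∈ powPeriods G 3)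
    (hcomm : ∀ i ∉ t, Commute v (a i)) :
    v ∈ Subgroup.upperCentralSeries G (t.card + 1) := by
  classical
  induction t using Finset.strongInduction generalizing v with
  | H t ih =>
    refine mem_upperCentralSeries_succ_of_closure_eq_top hgen (Set.forall_mem_range.2 fun j ↦ ?_)
    by_cases hj : j ∈ t
    · rw [← Finset.card_erase_add_one hj]
      refine ih _ (Finset.erase_ssubset hj) (commutatorElement_mem_of_mem_left hv _) fun i hi ↦ ?_
      obtain rfl | hij := eq_or_ne i j
      · exact commute_commutatorElement_self_of_mem_powPeriods hv _
      · have hit : i ∉ t := fun hit ↦ hi (Finset.mem_erase_of_ne_of_mem hij hit)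
        exact commute_commutatorElement_of_mem_powPeriods hv (hcomm i hit) _
    · rw [commutatorElement_eq_one_iff_commute.2 (hcomm j hj)]
      exact one_mem _

theorem powPeriods_three_le_upperCentralSeries [Fintype ι]
    (hgen : Subgroup.closure (Set.range a) = ⊤) :
    powPeriods G 3 ≤ Subgroup.upperCentralSeries G (Fintype.card ι + 1) := fun _ hv ↦
  mem_upperCentralSeries_of_mem_powPeriods_of_commute hgen (t := Finset.univ) hv
    fun i hi ↦ absurd (Finset.mem_univ i) hi

end UpperCentralSeries

theorem semi3abelian_omega1_le_Z_general {G : Type*} [Group G] {ι : Type*} [Fintype ι]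
    (hsemi : ∀ a b : G, (a * b) ^ 3 = 1 → a ^ 3 * b ^ 3 = 1)
    {a : ι → G} (hgen : Subgroup.closure (Set.range a) = ⊤) :
    Subgroup.closure {g : G | g ^ 3 = 1} ≤ Subgroup.upperCentralSeries G (Fintype.card ι + 1) :=
  (closure_pow_eq_one_le_powPeriods hsemi).trans (powPeriods_three_le_upperCentralSeries hgen)

/-- In a finite semi-3-abelian 3-group generated by `n` elements `a₁, …, a_n` with
`|G/Φ(G)| = 3^n`, one has `Ω₁(G) ≤ Z_{n+1}(G)`. -/
theorem semi3abelian_omega1_le_Z (G : Type*) [Group G] [Finite G]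
    (hG : IsPGroup 3 G)
    (hsemi : ∀ a b : G, (a * b) ^ 3 = 1 ↔ a ^ 3 * b ^ 3 = 1)
    (n : ℕ) (a : Fin n → G) (hgen : Subgroup.closure (Set.range a) = ⊤)
    (hcard : Nat.card (G ⧸ frattini G) = 3 ^ n) :
    Subgroup.closure {g : G | g ^ 3 = 1} ≤ upperCentralSeries G (n + 1) := by
  rw [← Fintype.card_fin n]
  exact semi3abelian_omega1_le_Z_general (fun a b ↦ (hsemi a b).1) hgen
end

section
/- Let G be a finite 3-group which is semi-3-abelian, not semi-9-abelian, and such that every proper subgroup of G is semi-9-abelian. Suppose a, b ∈ G satisfy (ab)⁹ = 1 and a⁹b⁹ ≠ 1. Then [ab,b,b]³ = [ab,b,b,ab,ab] and [ab,b,b,ab,b] ∈ Z(G), the center of G. -/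
/-- The commutator `[x,y] = x⁻¹ * y⁻¹ * x * y`. -/
def commElt {G : Type*} [Group G] (x y : G) : G := x⁻¹ * y⁻¹ * x * y

/-!
In a semi-3-abelian group `G` an element `e` with `e³ = 1` is right 2-Engel. Such elements generate
abelian normal subgroups all of whose elements are right 2-Engel, so that `G` acts on them by a
representation `ρ` with `(ρ g - 1)² = 0` for all `g`. Hence the operators `ρ g - 1` anticommute and
triple products of them are killed by `2`; as `e` has exponent 3, `[e,g,h]` is central and
`[e,[g,h]] = [e,h,g]`.

Put `x = ab`. As `G` is nilpotent and noncommutative, every normal closure `⟨g⟩ᴳ` is proper, hence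
semi-9-abelian. Then `G = ⟨x,b⟩` is abelian modulo the elements of `⟨x⟩ᴳ` with trivial ninth power,
so commutators have trivial ninth power, which makes all ninth powers central. The quotient of `G`
by its elements of central cube therefore has exponent 3; it is 2-Engel, so `[x,b,b]³` is central
and all `[x,b,b,g]` have cube one. The theorem follows by comparing two expansions of
`[y,xb] = [y,bx[x,b]]`, for `y = [x,b]` and `y = [x,b,b]`, and by expanding `[x³,b,b] = 1`.
-/

-- Left-normed: `x⋆y⋆z` is `[x,y,z]`. It binds more tightly than `*`.
local notation:72 g:72 "⋆" h:73 => commElt g h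

section Commutators

variable {G : Type*} [Group G]

theorem commElt_eq_one_iff {g h : G} : g⋆h = 1 ↔ Commute g h := by
  rw [commElt, mul_assoc, ← mul_inv_rev, inv_mul_eq_one, eq_comm, commute_iff_eq]

theorem commElt_eq_inv_mul_conj (g h : G) : g⋆h = g⁻¹ * (h⁻¹ * g * h) := by
  unfold commElt; group

theorem conj_eq_mul_commElt (g h : G) : h⁻¹ * g * h = g * g⋆h := by
  unfold commElt; group

theorem mul_eq_mul_mul_commElt (g h : G) : g * h = h * g * g⋆h := by
  unfold commElt; group

theorem commElt_inv (g h : G) : (g⋆h)⁻¹ = h⋆g := by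
  unfold commElt; group

theorem mul_commElt (g h k : G) : (g * h)⋆k = h⁻¹ * g⋆k * h * h⋆k := by
  unfold commElt; group

theorem commElt_mul (g h k : G) : g⋆(h * k) = g⋆k * g⋆h * g⋆h⋆k := by
  unfold commElt; group

theorem commElt_mem {N : Subgroup G} [hN : N.Normal] {g : G} (hg : g ∈ N) (h : G) :
    g⋆h ∈ N := by
  rw [commElt_eq_inv_mul_conj]
  exact mul_mem (inv_mem hg) (by simpa using hN.conj_mem g hg h⁻¹)

theorem map_commElt {H : Type*} [Group H] (f : G →* H) (g h : G) : f (g⋆h) = f g⋆f h := by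
  simp only [commElt, map_mul, map_inv]

theorem mem_center_iff_forall_commElt {z : G} :
    z ∈ Subgroup.center G ↔ ∀ g, z⋆g = 1 := by
  simp only [Subgroup.mem_center_iff, commElt_eq_one_iff, commute_iff_eq, eq_comm]

theorem mul_commElt_of_mem_center {z : G} (hz : z ∈ Subgroup.center G) (g h : G) :
    (g * z)⋆h = g⋆h := by
  rw [mul_commElt, mem_center_iff_forall_commElt.1 hz, mul_one, mul_assoc,
    Subgroup.mem_center_iff.1 hz, inv_mul_cancel_left]

theorem mem_center_of_closure_pair_eq_top {x b z : G} (hgen : Subgroup.closure {x, b} = ⊤)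
    (hx : z⋆x = 1) (hb : z⋆b = 1) : z ∈ Subgroup.center G := by
  simp only [Subgroup.center_eq_iInf hgen, Set.mem_insert_iff, Set.mem_singleton_iff,
    Subgroup.mem_iInf, forall_eq_or_imp, forall_eq, Subgroup.mem_centralizer_singleton_iff]
  exact ⟨commElt_eq_one_iff.1 hx, commElt_eq_one_iff.1 hb⟩

theorem inv_mul_mul_pow (g h : G) (n : ℕ) : (h⁻¹ * g * h) ^ n = h⁻¹ * g ^ n * h := by
  simpa only [inv_inv] using conj_pow (a := h⁻¹) (b := g)

theorem pow_eq_conj_pow_iff {g h : G} {n : ℕ} :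
    g ^ n = (h⁻¹ * g * h) ^ n ↔ Commute (g ^ n) h := by
  rw [inv_mul_mul_pow, mul_assoc, eq_inv_mul_iff_mul_eq, commute_iff_eq, eq_comm]

theorem pow_commElt (g h : G) (n : ℕ) : (g ^ n)⋆h = (g ^ n)⁻¹ * (g * g⋆h) ^ n := by
  rw [commElt_eq_inv_mul_conj, ← conj_eq_mul_commElt, inv_mul_mul_pow]

theorem pow_three_commElt (g h : G) :
    (g ^ 3)⋆h = g⋆h * g⋆h⋆g * (g⋆h⋆g * g⋆h⋆g⋆g) * (g⋆h * g⋆h⋆g) *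
      g⋆h := by
  simp only [commElt, pow_succ, pow_zero]; group

theorem mul_pow_three_of_commute_commElt {g h : G} (hg : Commute (h⋆g) g)
    (hh : Commute (h⋆g) h) : (g * h) ^ 3 = g ^ 3 * h ^ 3 * (h⋆g) ^ 3 := by
  have hhg := mul_eq_mul_mul_commElt h g
  generalize h⋆g = c at *
  calc (g * h) ^ 3 = g * (h * g) * (h * g) * h := by simp only [pow_succ, pow_zero]; group
    _ = g * g * h * (c * (g * h)) * (c * h) := by rw [hhg]; group
    _ = g * g * (h * g) * h * (c * (h * c)) := by rw [(hg.mul_right hh).eq, hh.eq]; group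
    _ = g * g * g * h * (c * h) * (c * (h * c)) := by rw [hhg]; group
    _ = g ^ 3 * (h * c) ^ 3 := by simp only [pow_succ, pow_zero]; group
    _ = g ^ 3 * h ^ 3 * c ^ 3 := by rw [hh.symm.mul_pow, mul_assoc]

-- Expand both sides of `[y, x * b] = [y, b * (x * [x,b])]`.
theorem commElt_commElt_eq_of_commute {y x b : G} (hxb : Commute (y⋆x) (y⋆b))
    (hcx : Commute (y⋆(x⋆b)) (y⋆x)) (hcb : Commute (y⋆(x⋆b)) (y⋆b))
    (hxc : y⋆x⋆(x⋆b) ∈ Subgroup.center G) :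
    y⋆x⋆b =
      y⋆(x⋆b) * (y⋆b⋆(x⋆b) * y⋆b⋆x * y⋆b⋆x⋆(x⋆b)) * y⋆x⋆(x⋆b) := by
  refine mul_left_cancel (a := y⋆b * y⋆x) ?_
  have hz := Subgroup.mem_center_iff.1 hxc
  have hcomm := (hcb.mul_right hcx).eq
  rw [← commElt_mul y x b, mul_eq_mul_mul_commElt x b, mul_assoc b, commElt_mul y b,
    commElt_mul y x, commElt_mul (y⋆b) x]
  generalize y⋆b⋆(x⋆b) * y⋆b⋆x * y⋆b⋆x⋆(x⋆b) = r
  generalize y⋆x⋆(x⋆b) = z at *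
  generalize y⋆(x⋆b) = c at *
  generalize y⋆x = p at *
  generalize y⋆b = t at *
  calc c * p * z * t * r = c * p * (z * (t * r)) := by simp only [mul_assoc]
    _ = c * (p * t) * r * z := by rw [← hz]; simp only [mul_assoc]
    _ = c * (t * p) * r * z := by rw [hxb.eq]
    _ = t * p * (c * r * z) := by rw [hcomm]; simp only [mul_assoc]

end Commutators

section QuadraticRepresentation

theorem mul_eq_neg_mul_of_sq_eq_zero {R : Type*} [Ring R] {X Y : R} (hX : X ^ 2 = 0)
    (hY : Y ^ 2 = 0) (hXY : (X + Y + X * Y) ^ 2 = 0) : X * Y = -(Y * X) := by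
  rw [pow_two] at hX hY
  have hXX (Z : R) : X * (X * Z) = 0 := by rw [← mul_assoc, hX, zero_mul]
  have hYY (Z : R) : Y * (Y * Z) = 0 := by rw [← mul_assoc, hY, zero_mul]
  have hexpand : X * Y + Y * X + X * Y * X + Y * X * Y + X * Y * X * Y = 0 := by
    rw [← hXY]
    simp only [pow_two, mul_add, add_mul, mul_assoc, hX, hY, hXX, mul_zero]
    abel
  have hYXY : Y * X * Y = 0 := by
    have h := congrArg (fun Z => (1 - X) * (Z * Y)) hexpand
    simpa [mul_add, add_mul, sub_mul, mul_assoc, hX, hY, hXX, hYY] using h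
  have hXYX : X * Y * X = 0 := by
    have h := congrArg (fun Z => X * Z) hexpand
    simpa [mul_add, mul_assoc, hXX, mul_assoc Y X Y ▸ hYXY] using h
  rw [hXYX, hYXY, zero_mul, add_zero, add_zero, add_zero] at hexpand
  exact eq_neg_of_add_eq_zero_left hexpand

variable {G R : Type*} [Group G] [Ring R] {ρ : G →* R}

theorem map_inv_sub_one_of_quadratic (hρ : ∀ g, (ρ g - 1) ^ 2 = 0) (g : G) :
    ρ g⁻¹ - 1 = -(ρ g - 1) := by
  have hinv : ρ g⁻¹ * ρ g = 1 := by rw [← map_mul, inv_mul_cancel, map_one]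
  calc ρ g⁻¹ - 1
      = ρ g⁻¹ * (ρ g - 1) ^ 2 - ρ g⁻¹ * ρ g * (ρ g - 1) + (ρ g⁻¹ * ρ g - 1) := by noncomm_ring
    _ = -(ρ g - 1) := by rw [hρ, hinv]; noncomm_ring

theorem sub_one_mul_sub_one_of_quadratic (hρ : ∀ g, (ρ g - 1) ^ 2 = 0) (g h : G) :
    (ρ g - 1) * (ρ h - 1) = -((ρ h - 1) * (ρ g - 1)) := by
  refine mul_eq_neg_mul_of_sq_eq_zero (hρ g) (hρ h) ?_
  have hgh : ρ g - 1 + (ρ h - 1) + (ρ g - 1) * (ρ h - 1) = ρ (g * h) - 1 := by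
    rw [map_mul]; noncomm_ring
  rw [hgh, hρ]

theorem map_commElt_sub_one_of_quadratic (hρ : ∀ g, (ρ g - 1) ^ 2 = 0) (g h : G) :
    ρ (g⋆h) - 1 = 2 * ((ρ g - 1) * (ρ h - 1)) := by
  have hg := eq_add_of_sub_eq (map_inv_sub_one_of_quadratic hρ g)
  have hh := eq_add_of_sub_eq (map_inv_sub_one_of_quadratic hρ h)
  have hgh := sub_one_mul_sub_one_of_quadratic hρ g h
  have hg2 := hρ g
  have hh2 := hρ h
  rw [commElt, map_mul, map_mul, map_mul, hg, hh]
  obtain ⟨X, hX⟩ : ∃ X, ρ g = X + 1 := ⟨ρ g - 1, by simp⟩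
  obtain ⟨Y, hY⟩ : ∃ Y, ρ h = Y + 1 := ⟨ρ h - 1, by simp⟩
  simp only [hX, hY, add_sub_cancel_right, pow_two] at *
  have hYX : Y * X = - (X * Y) := by rw [hgh, neg_neg]
  have hXX (Z : R) : X * (X * Z) = 0 := by rw [← mul_assoc, hg2, zero_mul]
  simp only [mul_add, add_mul, neg_mul, mul_neg, one_mul, mul_one, mul_assoc,
    hh2, hg2, hYX, hXX, mul_zero]
  noncomm_ring

theorem two_mul_sub_one_mul_sub_one_mul_sub_one (hρ : ∀ g, (ρ g - 1) ^ 2 = 0) (g h k : G) :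
    2 * ((ρ g - 1) * (ρ h - 1) * (ρ k - 1)) = 0 := by
  have hgh := sub_one_mul_sub_one_of_quadratic hρ g h
  have hgk := sub_one_mul_sub_one_of_quadratic hρ g k
  have hghk := sub_one_mul_sub_one_of_quadratic hρ g (h * k)
  have hhk : ρ (h * k) - 1 = (ρ h - 1) + (ρ k - 1) + (ρ h - 1) * (ρ k - 1) := by
    rw [map_mul]; noncomm_ring
  rw [hhk] at hghk
  generalize ρ g - 1 = X at *
  generalize ρ h - 1 = Y at *
  generalize ρ k - 1 = Z at *
  -- `X` anticommutes with `Y + Z + Y * Z`, hence with `Y * Z`; but it also commutes with it.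
  have hcycle : X * Y * Z = -(Y * Z * X) := by
    calc X * Y * Z = X * (Y + Z + Y * Z) - X * Y - X * Z := by noncomm_ring
      _ = -(Y * Z * X) := by rw [hghk, hgh, hgk]; noncomm_ring
  have h : Y * Z * X = X * Y * Z := by
    rw [mul_assoc, ← neg_eq_iff_eq_neg.2 hgk, mul_neg, ← mul_assoc, ← neg_mul, ← hgh]
  rw [h] at hcycle
  rw [two_mul]
  exact add_eq_zero_iff_eq_neg.2 hcycle

end QuadraticRepresentation

/-- A right 2-Engel element `a`, i.e. one with `[a,g,g] = 1` for all `g`. -/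
def IsRightTwoEngel {G : Type*} [Group G] (a : G) : Prop := ∀ g, a⋆g⋆g = 1

section AbelianNormal

variable {G : Type*} [Group G] (A : Subgroup G) [A.Normal] [IsMulCommutative A]

open scoped IsMulCommutative

/-- The action `g • u = g * u * g⁻¹` of `G` on an abelian normal subgroup `A`, as a representation
in the endomorphism ring of `A` written additively. Thus `conjRep A g⁻¹ - 1` is `u ↦ [u,g]`. -/
def conjRep : G →* AddMonoid.End (Additive A) :=
  (monoidEndToAdditive A).toMonoidHom.comp
    ((MulDistribMulAction.toMonoidEnd (MulAut A) A).comp MulAut.conjNormal)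

theorem coe_toMul_conjRep_inv_sub_one (g : G) (u : Additive A) :
    (((conjRep A g⁻¹ - 1) u).toMul : G) = (u.toMul : G)⋆g := by
  change ((MulAut.conjNormal g⁻¹ u.toMul / u.toMul : A) : G) = _
  rw [div_eq_inv_mul, Subgroup.coe_mul, MulAut.conjNormal_apply, inv_inv,
    commElt_eq_inv_mul_conj, Subgroup.coe_inv]

variable {A} (hA : ∀ u ∈ A, IsRightTwoEngel u)
include hA

theorem conjRep_sub_one_sq_eq_zero (g : G) : (conjRep A g - 1) ^ 2 = 0 := by
  ext u
  change (((conjRep A g - 1) ((conjRep A g - 1) (.ofMul u))).toMul : G) = 1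
  rw [← inv_inv g, coe_toMul_conjRep_inv_sub_one, coe_toMul_conjRep_inv_sub_one]
  exact hA _ (Subtype.prop _) g⁻¹

theorem commElt_commElt_eq_inv_of_mem {u : G} (hu : u ∈ A) (g h : G) :
    u⋆g⋆h = (u⋆h⋆g)⁻¹ := by
  have hop := sub_one_mul_sub_one_of_quadratic (conjRep_sub_one_sq_eq_zero hA) h⁻¹ g⁻¹
  have happ := congrArg (fun T => ((T (.ofMul ⟨u, hu⟩)).toMul : G)) hop
  rw [show u = ((Additive.ofMul (⟨u, hu⟩ : A)).toMul : G) from rfl]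
  simp only [← coe_toMul_conjRep_inv_sub_one]
  exact happ

theorem commElt_commElt_right_of_mem {u : G} (hu : u ∈ A) (g h : G) :
    u⋆(g⋆h) = (u⋆g⋆h) ^ 2 := by
  have hρ := conjRep_sub_one_sq_eq_zero hA
  have hop : conjRep A (g⋆h)⁻¹ - 1 = 2 * ((conjRep A h⁻¹ - 1) * (conjRep A g⁻¹ - 1)) := by
    rw [commElt_inv, map_commElt_sub_one_of_quadratic hρ, map_inv_sub_one_of_quadratic hρ,
      map_inv_sub_one_of_quadratic hρ, neg_mul_neg (conjRep A h - 1)]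
  have happ := congrArg (fun T => ((T (.ofMul ⟨u, hu⟩)).toMul : G)) hop
  rw [two_mul] at happ
  rw [pow_two, show u = ((Additive.ofMul (⟨u, hu⟩ : A)).toMul : G) from rfl]
  simp only [← coe_toMul_conjRep_inv_sub_one]
  exact happ

theorem commElt_commElt_commElt_sq_of_mem {u : G} (hu : u ∈ A) (g h k : G) :
    (u⋆g⋆h⋆k) ^ 2 = 1 := by
  have hop := two_mul_sub_one_mul_sub_one_mul_sub_one (conjRep_sub_one_sq_eq_zero hA) k⁻¹ h⁻¹ g⁻¹
  have happ := congrArg (fun T => ((T (.ofMul ⟨u, hu⟩)).toMul : G)) hop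
  rw [two_mul] at happ
  rw [pow_two, show u = ((Additive.ofMul (⟨u, hu⟩ : A)).toMul : G) from rfl]
  simp only [← coe_toMul_conjRep_inv_sub_one]
  exact happ

end AbelianNormal

namespace IsRightTwoEngel

variable {G : Type*} [Group G] {a : G}

theorem conj (ha : IsRightTwoEngel a) (g : G) : IsRightTwoEngel (g * a * g⁻¹) := by
  intro h
  calc (g * a * g⁻¹)⋆h⋆h = g * a⋆(g⁻¹ * h * g)⋆(g⁻¹ * h * g) * g⁻¹ := by
        unfold commElt; group
    _ = 1 := by rw [ha, mul_one, mul_inv_cancel]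

theorem commute_commElt_self (ha : IsRightTwoEngel a) (g : G) : Commute a (a⋆g) := by
  have hag : a⋆(a * g) = a⋆g := by unfold commElt; group
  have h₁ : Commute (a⋆g) (a * g) := hag ▸ commElt_eq_one_iff.1 (ha (a * g))
  have h₂ : Commute (a⋆g) g := commElt_eq_one_iff.1 (ha g)
  simpa using (h₁.mul_right h₂.inv_right).symm

theorem inv (ha : IsRightTwoEngel a) : IsRightTwoEngel a⁻¹ := by
  intro g
  have hinv : a⁻¹⋆g = (a⋆g)⁻¹ := by
    calc a⁻¹⋆g = a * (a⋆g)⁻¹ * a⁻¹ := by unfold commElt; group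
      _ = (a⋆g)⁻¹ := by rw [(ha.commute_commElt_self g).inv_right.eq, mul_inv_cancel_right]
  rw [hinv, commElt_eq_one_iff]
  exact (commElt_eq_one_iff.1 (ha g)).inv_left

theorem commute_conj_conj (ha : IsRightTwoEngel a) (g h : G) :
    Commute (g * a * g⁻¹) (h * a * h⁻¹) := by
  have hconj : h * a * h⁻¹ = g * a * g⁻¹ * (g * a * g⁻¹)⋆(g * h⁻¹) := by
    unfold commElt; group
  rw [hconj]
  exact (Commute.refl _).mul_right ((ha.conj g).commute_commElt_self _)

theorem isMulCommutative_normalClosure (ha : IsRightTwoEngel a) :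
    IsMulCommutative (Subgroup.normalClosure {a}) := by
  refine Subgroup.isMulCommutative_closure fun u hu v hv => ?_
  simp only [Group.mem_conjugatesOfSet_iff, Set.mem_singleton_iff, exists_eq_left,
    isConj_iff] at hu hv
  obtain ⟨⟨g, rfl⟩, ⟨h, rfl⟩⟩ := And.intro hu hv
  exact ha.commute_conj_conj g h

theorem of_mem_normalClosure (ha : IsRightTwoEngel a) {u : G}
    (hu : u ∈ Subgroup.normalClosure {a}) : IsRightTwoEngel u := by
  have := ha.isMulCommutative_normalClosure
  induction hu using Subgroup.closure_induction with
  | mem u hu =>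
    simp only [Group.mem_conjugatesOfSet_iff, Set.mem_singleton_iff, exists_eq_left,
      isConj_iff] at hu
    obtain ⟨g, rfl⟩ := hu
    exact ha.conj g
  | one => exact fun g => by simp [commElt]
  | inv u _ hu => exact hu.inv
  | mul u v hu hv hu' hv' =>
    intro g
    have hcomm : Commute (u⋆g) v :=
      setLike_mul_comm (commElt_mem (N := Subgroup.normalClosure {a}) hu g) hv
    rw [mul_commElt, mul_assoc v⁻¹, hcomm.eq, inv_mul_cancel_left, commElt_eq_one_iff]
    exact (commElt_eq_one_iff.1 (hu' g)).mul_left (commElt_eq_one_iff.1 (hv' g))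

theorem commElt_commElt_eq_inv (ha : IsRightTwoEngel a) (g h : G) :
    a⋆g⋆h = (a⋆h⋆g)⁻¹ :=
  have := ha.isMulCommutative_normalClosure
  commElt_commElt_eq_inv_of_mem (fun _ => ha.of_mem_normalClosure)
    (Subgroup.subset_normalClosure rfl) g h

theorem commElt_commElt_right (ha : IsRightTwoEngel a) (g h : G) :
    a⋆(g⋆h) = (a⋆g⋆h) ^ 2 :=
  have := ha.isMulCommutative_normalClosure
  commElt_commElt_right_of_mem (fun _ => ha.of_mem_normalClosure)
    (Subgroup.subset_normalClosure rfl) g h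

theorem commElt_commElt_commElt_sq (ha : IsRightTwoEngel a) (g h k : G) :
    (a⋆g⋆h⋆k) ^ 2 = 1 :=
  have := ha.isMulCommutative_normalClosure
  commElt_commElt_commElt_sq_of_mem (fun _ => ha.of_mem_normalClosure)
    (Subgroup.subset_normalClosure rfl) g h k

end IsRightTwoEngel

/-- The condition `(a * b) ^ n = 1 ↔ a ^ n * b ^ n = 1`; a finite `p`-group satisfying it for
`n = p ^ i` is called semi-`p ^ i`-abelian. -/
def SemiAbelian (n : ℕ) (G : Type*) [Group G] : Prop :=
  ∀ a b : G, (a * b) ^ n = 1 ↔ a ^ n * b ^ n = 1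

namespace SemiAbelian

open scoped commutatorElement

section Torsion

variable {G : Type*} [Group G] {n : ℕ}

theorem inv_mul_pow_eq_one_iff (hG : SemiAbelian n G) {g h : G} :
    (g⁻¹ * h) ^ n = 1 ↔ g ^ n = h ^ n := by
  rw [hG, inv_pow, inv_mul_eq_one]

theorem commElt_pow_eq_one_iff (hG : SemiAbelian n G) {g h : G} :
    (g⋆h) ^ n = 1 ↔ Commute (g ^ n) h := by
  rw [commElt_eq_inv_mul_conj, hG.inv_mul_pow_eq_one_iff, pow_eq_conj_pow_iff]

theorem commElt_pow_eq_one (hG : SemiAbelian n G) {e : G} (he : e ^ n = 1) (g : G) :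
    (e⋆g) ^ n = 1 := by
  rw [hG.commElt_pow_eq_one_iff, he]
  exact Commute.one_left g

/-- The elements `g` with `g ^ n = 1` of a semi-abelian group, which form a subgroup. -/
def torsion (hG : SemiAbelian n G) : Subgroup G where
  carrier := {g | g ^ n = 1}
  mul_mem' hg hh := (hG _ _).2 (by rw [hg, hh, one_mul])
  one_mem' := one_pow n
  inv_mem' {g} (hg : g ^ n = 1) := show g⁻¹ ^ n = 1 by rw [inv_pow, hg, inv_one]

theorem mem_torsion {hG : SemiAbelian n G} {g : G} : g ∈ hG.torsion ↔ g ^ n = 1 := Iff.rfl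

instance characteristic_torsion (hG : SemiAbelian n G) : hG.torsion.Characteristic :=
  Subgroup.characteristic_iff_le_comap.2 fun φ g hg => by
    simpa [mem_torsion, ← map_pow] using hg

theorem mem_upperCentralSeriesStep_torsion {hG : SemiAbelian n G} {g : G} :
    g ∈ Subgroup.upperCentralSeriesStep hG.torsion ↔ g ^ n ∈ Subgroup.center G := by
  have hcomm (h : G) : ⁅g, h⁆ = g⁻¹⋆h⁻¹ := by
    rw [commutatorElement_def, commElt, inv_inv, inv_inv]
  simp only [Subgroup.mem_upperCentralSeriesStep, hcomm, mem_torsion, hG.commElt_pow_eq_one_iff,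
    inv_pow, Commute.inv_inv_iff, Subgroup.mem_center_iff]
  simp only [commute_iff_eq, eq_comm]

theorem pow_mem_center_iff (hG : SemiAbelian n G) {g : G} :
    g ^ n ∈ Subgroup.center G ↔ ∀ h, (g⋆h) ^ n = 1 := by
  simp only [hG.commElt_pow_eq_one_iff, Subgroup.mem_center_iff, commute_iff_eq, eq_comm]

theorem commElt_pow_eq_one_iff_of_mem {K : Subgroup G} [hKn : K.Normal] (hK : SemiAbelian n K)
    {g : G} (hg : g ∈ K) {h : G} : (g⋆h) ^ n = 1 ↔ Commute (g ^ n) h := by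
  have hconj : h⁻¹ * g * h ∈ K := by simpa using hKn.conj_mem g hg h⁻¹
  have hiff := hK.inv_mul_pow_eq_one_iff (g := ⟨g, hg⟩) (h := ⟨h⁻¹ * g * h, hconj⟩)
  simp only [← Subtype.coe_inj, Subgroup.coe_pow, Subgroup.coe_mul, Subgroup.coe_inv,
    Subgroup.coe_one] at hiff
  rw [commElt_eq_inv_mul_conj, hiff, pow_eq_conj_pow_iff]

end Torsion

section RightTwoEngel

variable {G : Type*} [Group G]

theorem mul_conj_mul_conj_conj_eq_one (hG : SemiAbelian 3 G) {e : G} (he : e ^ 3 = 1) (g : G) :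
    g⁻¹ * (g⁻¹ * e * g) * g * (g⁻¹ * e * g) * e = 1 := by
  have hcube : g ^ 3 = (g * e) ^ 3 := by
    rw [← hG.inv_mul_pow_eq_one_iff, inv_mul_cancel_left, he]
  calc g⁻¹ * (g⁻¹ * e * g) * g * (g⁻¹ * e * g) * e = (g ^ 3)⁻¹ * (g * e) ^ 3 := by
        simp only [pow_succ, pow_zero]; group
    _ = 1 := by rw [← hcube, inv_mul_cancel]

theorem commute_conj (hG : SemiAbelian 3 G) {e : G} (he : e ^ 3 = 1) (g : G) :
    Commute e (g⁻¹ * e * g) := by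
  have hmul := hG.mul_conj_mul_conj_conj_eq_one he g
  have hmul' : e * (g⁻¹ * e * g) * (g⁻¹ * (g⁻¹ * e * g) * g) = 1 := by
    rw [← inv_inj, inv_one,
      ← hG.mul_conj_mul_conj_conj_eq_one (e := e⁻¹) (by rw [inv_pow, he, inv_one]) g]
    group
  rw [mul_assoc] at hmul
  exact (eq_inv_of_mul_eq_one_left hmul').trans (eq_inv_of_mul_eq_one_right hmul).symm

theorem isRightTwoEngel (hG : SemiAbelian 3 G) {e : G} (he : e ^ 3 = 1) : IsRightTwoEngel e := by
  intro g
  have hmul := hG.mul_conj_mul_conj_conj_eq_one he g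
  have hcomm := hG.commute_conj he g
  have hf : (g⁻¹ * e * g) ^ 3 = 1 := by rw [inv_mul_mul_pow, he, mul_one, inv_mul_cancel]
  rw [commElt_eq_inv_mul_conj e g, commElt_eq_one_iff]
  obtain ⟨f, hfe⟩ : ∃ f, f = g⁻¹ * e * g := ⟨_, rfl⟩
  rw [← hfe] at hmul hcomm hf ⊢
  have hfg : g⁻¹ * f * g = e⁻¹ * f⁻¹ := by
    rw [mul_assoc _ f e] at hmul
    rw [eq_inv_of_mul_eq_one_left hmul, mul_inv_rev]
  calc e⁻¹ * f * g = g * ((g⁻¹ * e * g)⁻¹ * (g⁻¹ * f * g)) := by group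
    _ = g * (e⁻¹ * (f⁻¹ * f⁻¹)) := by rw [← hfe, hfg, hcomm.inv_inv.symm.left_comm]
    _ = g * (e⁻¹ * (f⁻¹ * f⁻¹ * f ^ 3)) := by rw [hf, mul_one]
    _ = g * (e⁻¹ * f) := by simp only [pow_succ, pow_zero]; group

end RightTwoEngel

end SemiAbelian

theorem commElt_commElt_mem_of_pow_three_mem {G : Type*} [Group G] {N : Subgroup G} [N.Normal]
    (hN : ∀ g, g ^ 3 ∈ N) (g h : G) : g⋆h⋆h ∈ N := by
  have hpow (q : G ⧸ N) : q ^ 3 = 1 := by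
    induction q using QuotientGroup.induction_on with
    | H g => exact (QuotientGroup.eq_one_iff _).2 (hN g)
  have hQ : SemiAbelian 3 (G ⧸ N) := fun p q => by simp only [hpow, one_mul]
  have hEngel := hQ.isRightTwoEngel (hpow (QuotientGroup.mk' N g)) (QuotientGroup.mk' N h)
  rwa [← map_commElt, ← map_commElt, ← MonoidHom.mem_ker, QuotientGroup.ker_mk'] at hEngel

namespace SemiAbelian

section CubeOne

variable {G : Type*} [Group G] (hG : SemiAbelian 3 G)
include hG

theorem commElt_commElt_commElt_eq_one {e : G} (he : e ^ 3 = 1) (g h k : G) :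
    e⋆g⋆h⋆k = 1 := by
  have hsq := (hG.isRightTwoEngel he).commElt_commElt_commElt_sq g h k
  have hcube : (e⋆g⋆h⋆k) ^ 3 = 1 :=
    hG.commElt_pow_eq_one (hG.commElt_pow_eq_one (hG.commElt_pow_eq_one he g) h) k
  rwa [pow_succ, hsq, one_mul] at hcube

theorem commElt_commElt_mem_center {e : G} (he : e ^ 3 = 1) (g h : G) :
    e⋆g⋆h ∈ Subgroup.center G :=
  mem_center_iff_forall_commElt.2 (hG.commElt_commElt_commElt_eq_one he g h)

theorem commElt_commElt_right {e : G} (he : e ^ 3 = 1) (g h : G) :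
    e⋆(g⋆h) = e⋆h⋆g := by
  have hcube : (e⋆g⋆h) ^ 3 = 1 :=
    hG.commElt_pow_eq_one (hG.commElt_pow_eq_one he g) h
  rw [(hG.isRightTwoEngel he).commElt_commElt_right,
    (hG.isRightTwoEngel he).commElt_commElt_eq_inv h g]
  exact eq_inv_of_mul_eq_one_left ((pow_succ _ 2).symm.trans hcube)

theorem commElt_commElt_right_mem_center {e : G} (he : e ^ 3 = 1) (g h : G) :
    e⋆(g⋆h) ∈ Subgroup.center G := by
  rw [hG.commElt_commElt_right he]
  exact hG.commElt_commElt_mem_center he h g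

theorem commElt_commElt_commElt_right_eq_one {e : G} (he : e ^ 3 = 1) (g h k : G) :
    e⋆g⋆(h⋆k) = 1 := by
  rw [hG.commElt_commElt_right (hG.commElt_pow_eq_one he g), hG.commElt_commElt_commElt_eq_one he]

theorem commute_commElt_commElt {e : G} (he : e ^ 3 = 1) (g h k : G) :
    Commute e (g⋆h⋆k) := by
  rw [← commElt_eq_one_iff, hG.commElt_commElt_right he,
    hG.commElt_commElt_commElt_right_eq_one he]

theorem commElt_commElt_pow_three_mem_center (h9 : ∀ g : G, g ^ 9 ∈ Subgroup.center G)
    (g h : G) : (g⋆h⋆h) ^ 3 ∈ Subgroup.center G := by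
  refine mem_upperCentralSeriesStep_torsion.1
    (commElt_commElt_mem_of_pow_three_mem (N := Subgroup.upperCentralSeriesStep hG.torsion)
      (fun g => ?_) g h)
  rw [mem_upperCentralSeriesStep_torsion, ← pow_mul]
  exact h9 g

theorem commElt_commElt_self_pow_three_eq_one {x : G} (hx : x ^ 9 = 1) (b : G) :
    (x⋆b⋆x) ^ 3 = 1 := by
  have hx3 : (x ^ 3) ^ 3 = 1 := by rw [← pow_mul, hx]
  have hself : (x ^ 3)⋆x = 1 := commElt_eq_one_iff.2 ((Commute.refl x).pow_left 3)
  have hcomm : Commute (x ^ 3) (x⋆b) := by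
    rw [← commElt_eq_one_iff, hG.commElt_commElt_right hx3,
      (hG.isRightTwoEngel hx3).commElt_commElt_eq_inv, hself]
    simp [commElt]
  rw [← commElt_inv, inv_pow, inv_eq_one, hG.commElt_pow_eq_one_iff]
  exact hcomm

theorem pow_three_commElt_of_commElt_pow_three {x b : G} (hv : (x⋆b⋆x) ^ 3 = 1) :
    (x ^ 3)⋆b = (x⋆b) ^ 3 * (x⋆b⋆x⋆x) * (x⋆b⋆x⋆(x⋆b)) ^ 2 := by
  have hs : x⋆b⋆x⋆(x⋆b) ∈ Subgroup.center G :=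
    hG.commElt_commElt_right_mem_center hv x b
  have hs3 := hG.commElt_pow_eq_one hv (x⋆b)
  have hrv : Commute (x⋆b⋆x) (x⋆b⋆x⋆x) :=
    (hG.isRightTwoEngel hv).commute_commElt_self x
  have hry : Commute (x⋆b⋆x⋆x) (x⋆b) :=
    commElt_eq_one_iff.1 (hG.commElt_commElt_commElt_right_eq_one hv x x b)
  have hvy := mul_eq_mul_mul_commElt (x⋆b⋆x) (x⋆b)
  have hcube := mul_pow_three_of_commute_commElt (g := x⋆b) (h := x⋆b⋆x)
    (Subgroup.mem_center_iff.1 hs _).symm (Subgroup.mem_center_iff.1 hs _).symm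
  rw [hv, hs3, mul_one, mul_one] at hcube
  rw [pow_three_commElt, ← hcube]
  have hsc := Subgroup.mem_center_iff.1 hs
  generalize x⋆b⋆x⋆(x⋆b) = s at *
  generalize x⋆b⋆x⋆x = r at *
  generalize x⋆b⋆x = v at *
  generalize x⋆b = y at *
  calc y * v * (v * r) * (y * v) * y = y * v * (v * (r * (y * v * y))) := by group
    _ = y * v * (v * y) * (v * y) * r := by
      rw [((hry.mul_right hrv.symm).mul_right hry).eq]; group
    _ = y * v * (y * v * s) * (y * v * s) * r := by rw [hvy]
    _ = y * v * (y * v) * (s * (y * v * (s * r))) := by group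
    _ = (y * v) ^ 3 * r * s ^ 2 := by
      rw [← hsc (y * v * (s * r)), ← hsc r]
      simp only [pow_succ, pow_zero]; group

theorem exists_mem_center_jacobi {u g : G} (hw : ∀ h, (u⋆g⋆h) ^ 3 = 1) (x b : G) :
    ∃ z ∈ Subgroup.center G,
      u⋆g⋆x⋆b = u⋆g⋆(x⋆b) * u⋆g⋆b⋆x * z := by
  have hcomm (h k : G) : Commute (u⋆g⋆h) (u⋆g⋆k) :=
    hG.commute_commElt_commElt (hw h) u g k
  have hcenter (h : G) : u⋆g⋆h⋆(x⋆b) ∈ Subgroup.center G :=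
    hG.commElt_commElt_right_mem_center (hw h) x b
  refine ⟨_, mul_mem (hcenter b) (hcenter x), ?_⟩
  rw [commElt_commElt_eq_of_commute (hcomm x b) (hcomm _ x) (hcomm _ b) (hcenter x),
    hG.commElt_commElt_commElt_right_eq_one (hw b), mul_one,
    ← Subgroup.mem_center_iff.1 (hcenter b)]
  simp only [mul_assoc]

theorem jacobi_commElt {u g : G} (hw : ∀ h, (u⋆g⋆h) ^ 3 = 1) (x b k : G) :
    u⋆g⋆x⋆b⋆k = u⋆g⋆(x⋆b)⋆k * u⋆g⋆b⋆x⋆k := by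
  obtain ⟨z, hz, heq⟩ := hG.exists_mem_center_jacobi hw x b
  have hcomm : Commute (u⋆g⋆(x⋆b)⋆k) (u⋆g⋆b⋆x) :=
    hG.commute_commElt_commElt (hG.commElt_pow_eq_one (hw _) k) _ _ x
  rw [heq, mul_commElt_of_mem_center hz, mul_commElt, mul_assoc (_⋆_)⁻¹, hcomm.eq,
    inv_mul_cancel_left]

theorem commElt_commElt_right_left {u g : G} (hw : ∀ h, (u⋆g⋆h) ^ 3 = 1) (x b : G) :
    u⋆g⋆(x⋆b)⋆x = u⋆g⋆x⋆b⋆x := by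
  rw [hG.jacobi_commElt hw, hG.isRightTwoEngel (hw b), mul_one]

theorem commElt_commElt_right_right_mem_center {u g : G} (hw : ∀ h, (u⋆g⋆h) ^ 3 = 1)
    (x b : G) : u⋆g⋆(x⋆b)⋆b ∈ Subgroup.center G := by
  have hswap := hG.jacobi_commElt hw x b b
  rw [hG.isRightTwoEngel (hw x), eq_comm, mul_eq_one_iff_eq_inv] at hswap
  rw [hswap]
  exact inv_mem (hG.commElt_commElt_mem_center (hw b) x b)

theorem commElt_commElt_right_commElt_eq_one {u g : G} (hw : ∀ h, (u⋆g⋆h) ^ 3 = 1)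
    (x b h : G) : u⋆g⋆(x⋆b)⋆(h⋆b) = 1 := by
  rw [hG.commElt_commElt_right (hw _)]
  exact mem_center_iff_forall_commElt.1 (hG.commElt_commElt_right_right_mem_center hw x b) h

theorem exists_mem_center_commElt_jacobi {x b : G} (hv : (x⋆b⋆x) ^ 3 = 1)
    (hw : (x⋆b⋆b⋆x) ^ 3 = 1) :
    ∃ z ∈ Subgroup.center G, x⋆b⋆x⋆b = x⋆b⋆b⋆(x⋆b) * x⋆b⋆b⋆x * z := by
  have hself : x⋆b⋆(x⋆b) = 1 := commElt_eq_one_iff.2 (Commute.refl _)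
  have hcenter {e : G} (he : e ^ 3 = 1) : e⋆(x⋆b) ∈ Subgroup.center G :=
    hG.commElt_commElt_right_mem_center he x b
  refine ⟨_, mul_mem (hcenter hw) (hcenter hv), ?_⟩
  rw [commElt_commElt_eq_of_commute (hG.commute_commElt_commElt hv x b b)
    (hself ▸ Commute.one_left _) (hself ▸ Commute.one_left _) (hcenter hv), hself, one_mul]
  simp only [mul_assoc]

theorem commElt_commElt_self_commElt_commElt {x b : G} (hv : (x⋆b⋆x) ^ 3 = 1)
    (hw : ∀ h, (x⋆b⋆b⋆h) ^ 3 = 1) :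
    x⋆b⋆x⋆b⋆x = x⋆b⋆b⋆x⋆b⋆x * x⋆b⋆b⋆x⋆x := by
  obtain ⟨z, hz, heq⟩ := hG.exists_mem_center_commElt_jacobi hv (hw x)
  have hcenter := Subgroup.mem_center_iff.1 (hG.commElt_commElt_mem_center (hw x) b x)
  rw [heq, mul_commElt_of_mem_center hz, mul_commElt, hG.commElt_commElt_right_left hw,
    hcenter, inv_mul_cancel_right]

theorem pow_three_commElt_of_forall_commElt_pow_three {x b : G}
    (hw : ∀ h, (x⋆b⋆b⋆h) ^ 3 = 1) : ((x⋆b) ^ 3)⋆b = (x⋆b⋆b) ^ 3 := by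
  have hq := hG.commElt_commElt_right_commElt_eq_one hw x b
  rw [pow_commElt, mul_pow_three_of_commute_commElt (commElt_eq_one_iff.1 (hq x))
    (commElt_eq_one_iff.1 (hq (x⋆b))), hw, mul_one, inv_mul_cancel_left]

theorem commElt_commElt_pow_three {x b : G} (hx : x ^ 9 = 1)
    (hw : ∀ h, (x⋆b⋆b⋆h) ^ 3 = 1) : (x⋆b⋆b) ^ 3 = x⋆b⋆x⋆b⋆x := by
  have hv := hG.commElt_commElt_self_pow_three_eq_one hx b
  have hs : x⋆b⋆x⋆(x⋆b) ∈ Subgroup.center G :=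
    hG.commElt_commElt_right_mem_center hv x b
  have hx3 : (x ^ 3) ^ 3 = 1 := by rw [← pow_mul, hx]
  have hw3 := Subgroup.mem_center_iff.1 (hG.pow_mem_center_iff.2 hw)
  -- `x ^ 3` is right 2-Engel, so the expansion of `[x ^ 3, b, b] = 1` is the relation sought.
  have hEngel := hG.isRightTwoEngel hx3 b
  rw [hG.pow_three_commElt_of_commElt_pow_three hv, mul_commElt_of_mem_center (pow_mem hs 2),
    mul_commElt, hG.pow_three_commElt_of_forall_commElt_pow_three hw, hw3, inv_mul_cancel_right,
    mul_eq_one_iff_eq_inv] at hEngel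
  rw [hEngel, (hG.isRightTwoEngel hv).commElt_commElt_eq_inv b x]

theorem commElt_relations_of_closure_pair_eq_top {x b : G} (hgen : Subgroup.closure {x, b} = ⊤)
    (hx : x ^ 9 = 1) (h9 : ∀ g : G, g ^ 9 ∈ Subgroup.center G) :
    (x⋆b⋆b) ^ 3 = x⋆b⋆b⋆x⋆x ∧ x⋆b⋆b⋆x⋆b ∈ Subgroup.center G := by
  have hw3 := hG.commElt_commElt_pow_three_mem_center h9 x b
  have hw := hG.pow_mem_center_iff.1 hw3
  have hpbx := hG.commElt_commElt_mem_center (hw x) b x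
  have hcube : (x⋆b⋆b) ^ 3 = x⋆b⋆b⋆x⋆b⋆x * x⋆b⋆b⋆x⋆x := by
    rw [hG.commElt_commElt_pow_three hx hw, hG.commElt_commElt_self_commElt_commElt
      (hG.commElt_commElt_self_pow_three_eq_one hx b) hw]
  have hpx : x⋆b⋆b⋆x⋆x ∈ Subgroup.center G := by
    rwa [hcube, Subgroup.mul_mem_cancel_left _ hpbx] at hw3
  have hpbx_eq : x⋆b⋆b⋆x⋆b⋆x = 1 := by
    rw [(hG.isRightTwoEngel (hw x)).commElt_commElt_eq_inv,
      mem_center_iff_forall_commElt.1 hpx, inv_one]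
  rw [hpbx_eq, one_mul] at hcube
  exact ⟨hcube, mem_center_of_closure_pair_eq_top hgen hpbx_eq (hG.isRightTwoEngel (hw x) b)⟩

end CubeOne

end SemiAbelian

section NormalClosure

theorem isCyclic_of_normalClosure_singleton_eq_top {G : Type*} [Group G] [Group.IsNilpotent G]
    {g : G} (hg : Subgroup.normalClosure {g} = ⊤) : IsCyclic G := by
  revert g
  refine Group.nilpotent_center_quotient_ind
    (P := fun G _ _ => ∀ {g : G}, Subgroup.normalClosure {g} = ⊤ → IsCyclic G) G
    (fun G _ _ _ _ => inferInstance) fun G _ _ ih g hg => ?_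
  have hmk := QuotientGroup.mk'_surjective (Subgroup.center G)
  have : IsCyclic (G ⧸ Subgroup.center G) := ih (g := QuotientGroup.mk' _ g) <| by
    rw [← Set.image_singleton, ← Subgroup.map_normalClosure _ _ hmk, hg,
      Subgroup.map_top_of_surjective _ hmk]
  have := MonoidHom.isMulCommutative_of_isCyclic_of_ker_le_center
    (QuotientGroup.mk' (Subgroup.center G)) (QuotientGroup.ker_mk' _).le
  have hzpowers : Subgroup.normalClosure {g} ≤ Subgroup.zpowers g :=
    Subgroup.normalClosure_le_normal (by simp)
  exact isCyclic_iff_exists_zpowers_eq_top.2 ⟨g, top_le_iff.1 (hg ▸ hzpowers)⟩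

theorem normalClosure_singleton_ne_top {G : Type*} [Group G] [Group.IsNilpotent G] {a b : G}
    (hab : ¬ Commute a b) (g : G) : Subgroup.normalClosure {g} ≠ ⊤ := fun hg =>
  have := isCyclic_of_normalClosure_singleton_eq_top hg
  hab (IsMulCommutative.is_comm.comm a b)

variable {G : Type*} [Group G]

theorem commElt_mem_of_closure_pair_eq_top {N : Subgroup G} [N.Normal] {x b : G} (hx : x ∈ N)
    (hgen : Subgroup.closure {x, b} = ⊤) (g h : G) : g⋆h ∈ N := by
  have hmk := QuotientGroup.mk'_surjective N
  have hzpowers : Subgroup.zpowers (QuotientGroup.mk' N b) = ⊤ := by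
    rw [← Subgroup.map_top_of_surjective _ hmk, ← hgen, MonoidHom.map_closure, Set.image_pair,
      show QuotientGroup.mk' N x = 1 from (QuotientGroup.eq_one_iff x).2 hx,
      Subgroup.closure_insert_one, Subgroup.zpowers_eq_closure]
  have := isCyclic_iff_exists_zpowers_eq_top.2 ⟨_, hzpowers⟩
  rw [← QuotientGroup.ker_mk' N, MonoidHom.mem_ker, map_commElt, commElt_eq_one_iff]
  exact IsMulCommutative.is_comm.comm _ _

namespace SemiAbelian

variable {n : ℕ}

theorem commElt_pow_eq_one_of_closure_pair_eq_top {x b : G}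
    (hx : SemiAbelian n (Subgroup.normalClosure {x})) (hxn : x ^ n = 1)
    (hgen : Subgroup.closure {x, b} = ⊤) (g h : G) : (g⋆h) ^ n = 1 := by
  have hmem : x ∈ hx.torsion.map (Subgroup.normalClosure {x}).subtype :=
    ⟨⟨x, Subgroup.subset_normalClosure rfl⟩, Subtype.ext hxn, rfl⟩
  obtain ⟨c, hc, hcg⟩ := commElt_mem_of_closure_pair_eq_top hmem hgen g h
  rw [← hcg, Subgroup.subtype_apply, ← Subgroup.coe_pow, mem_torsion.1 hc, Subgroup.coe_one]

theorem pow_mem_center_of_closure_pair_eq_top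
    (hG : ∀ g : G, SemiAbelian n (Subgroup.normalClosure {g})) {x b : G} (hx : x ^ n = 1)
    (hgen : Subgroup.closure {x, b} = ⊤) (g : G) : g ^ n ∈ Subgroup.center G := by
  refine Subgroup.mem_center_iff.2 fun h => Eq.symm ?_
  exact ((hG g).commElt_pow_eq_one_iff_of_mem (Subgroup.subset_normalClosure rfl)).1
    ((hG x).commElt_pow_eq_one_of_closure_pair_eq_top hx hgen g h)

end SemiAbelian

theorem closure_mul_pair_eq_top {n : ℕ}
    (hproper : ∀ H : Subgroup G, H ≠ ⊤ → SemiAbelian n H) {a b : G} (hab : (a * b) ^ n = 1)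
    (hab' : a ^ n * b ^ n ≠ 1) : Subgroup.closure {a * b, b} = ⊤ := by
  by_contra hne
  have hb : b ∈ Subgroup.closure {a * b, b} := Subgroup.subset_closure (by simp)
  have ha : a ∈ Subgroup.closure {a * b, b} :=
    (Subgroup.mul_mem_cancel_right _ hb).1 (Subgroup.subset_closure (by simp))
  have hiff := hproper _ hne ⟨a, ha⟩ ⟨b, hb⟩
  simp only [← Subtype.coe_inj, Subgroup.coe_pow, Subgroup.coe_mul, Subgroup.coe_one] at hiff
  exact hab' (hiff.1 hab)

end NormalClosure

theorem inner_semi9abelian_case1_general {G : Type*} [Group G] [Group.IsNilpotent G]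
    (h3 : SemiAbelian 3 G) (hproper : ∀ H : Subgroup G, H ≠ ⊤ → SemiAbelian 9 H) {a b : G}
    (hab : (a * b) ^ 9 = 1) (hab' : a ^ 9 * b ^ 9 ≠ 1) :
    ((a * b)⋆b⋆b) ^ 3 = (a * b)⋆b⋆b⋆(a * b)⋆(a * b) ∧
      (a * b)⋆b⋆b⋆(a * b)⋆b ∈ Subgroup.center G := by
  have hncomm : ¬ Commute a b := fun h => hab' (by rw [← h.mul_pow, hab])
  have hgen := closure_mul_pair_eq_top hproper hab hab'
  have hclosure (g : G) : SemiAbelian 9 (Subgroup.normalClosure {g}) :=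
    hproper _ (normalClosure_singleton_ne_top hncomm g)
  have h9 := SemiAbelian.pow_mem_center_of_closure_pair_eq_top hclosure hab hgen
  exact h3.commElt_relations_of_closure_pair_eq_top hgen hab h9

/-- For a finite 3-group which is semi-3-abelian, not semi-9-abelian, and all of whose
proper subgroups are semi-9-abelian: if `(ab)⁹ = 1` and `a⁹b⁹ ≠ 1`, then
`[ab,b,b]³ = [ab,b,b,ab,ab]` and `[ab,b,b,ab,b] ∈ Z(G)`. -/
theorem inner_semi9abelian_case1 (G : Type*) [Group G] [Finite G]
    (hG : IsPGroup 3 G)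
    (h3 : ∀ a b : G, (a * b) ^ 3 = 1 ↔ a ^ 3 * b ^ 3 = 1)
    (h9 : ¬ (∀ a b : G, (a * b) ^ 9 = 1 ↔ a ^ 9 * b ^ 9 = 1))
    (hproper : ∀ H : Subgroup G, H ≠ ⊤ →
      ∀ a b : H, (a * b) ^ 9 = 1 ↔ a ^ 9 * b ^ 9 = 1)
    (a b : G) (hab : (a * b) ^ 9 = 1) (hab' : a ^ 9 * b ^ 9 ≠ 1) :
    (commElt (commElt (a * b) b) b) ^ 3 =
        commElt (commElt (commElt (commElt (a * b) b) b) (a * b)) (a * b) ∧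
    commElt (commElt (commElt (commElt (a * b) b) b) (a * b)) b ∈
      Subgroup.center G := by
  have : Fact (Nat.Prime 3) := ⟨Nat.prime_three⟩
  have := hG.isNilpotent
  exact inner_semi9abelian_case1_general h3 hproper hab hab'
end
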